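/- arXiv:2402.07816 — 13 statements merged into one kernel-verified Lean document; each statement's English description precedes it below -/
import Mathlib

section
/- Let (V^α)_{α∈ℚ} be a weak V-filtration on M. Then for every α ∈ ℚ with α ≠ 0, the k-linear maps induced by T from V^α/V^{>α} to V^{α+1}/V^{>α+1}, and by D from V^{α+1}/V^{>α+1} to V^α/V^{>α} (both well defined because T(V^β) ⊆ V^{β+1} and D(V^β) ⊆ V^{β−1} for all β), are bijective. -/
open Module

section VFiltration

variable {k : Type*} [Field k] [CharZero k]
variable {M : Type*} [AddCommGroup M] [Module k M]

/-- The subalgebra `A0 ⊆ End_k(M)` generated by `T`, `S = -(D∘T)` and the set `C`. -/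
def VFilt.A0 (T D : Module.End k M) (C : Set (Module.End k M)) :
    Subalgebra k (Module.End k M) :=
  Algebra.adjoin k ({T, -(D * T)} ∪ C)

/-- `V^{>α} = ⋃_{β > α} V^β`. -/
def VFilt.gt (V : ℚ → Submodule k M) (α : ℚ) : Submodule k M := ⨆ β > α, V β

/-- A weak `V`-filtration on `M` with respect to the data `T`, `D`, `C`. -/
structure IsWeakVFiltration (T D : Module.End k M) (C : Set (Module.End k M))
    (V : ℚ → Submodule k M) : Prop where
  /-- decreasing -/
  antitone : Antitone V
  /-- exhaustive -/
  exhaustive : ∀ m : M, ∃ α : ℚ, m ∈ V α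
  /-- discrete and left-continuous -/
  discrete : ∃ ℓ : ℕ, 0 < ℓ ∧ ∀ (i : ℤ) (α β : ℚ),
    α ∈ Set.Ioc ((i : ℚ) / ℓ) ((i + 1 : ℚ) / ℓ) →
    β ∈ Set.Ioc ((i : ℚ) / ℓ) ((i + 1 : ℚ) / ℓ) → V α = V β
  /-- each `V^α` is stable under every element of `A0` -/
  stable : ∀ a ∈ VFilt.A0 T D C, ∀ α : ℚ, (V α).map a ≤ V α
  /-- `T(V^α) ⊆ V^{α+1}` -/
  mapT_le : ∀ α : ℚ, (V α).map T ≤ V (α + 1)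
  /-- `D(V^α) ⊆ V^{α-1}` -/
  mapD_le : ∀ α : ℚ, (V α).map D ≤ V (α - 1)
  /-- `(S + α·id)^N (V^α) ⊆ V^{>α}` for some `N ≥ 1` -/
  nilpotent : ∀ α : ℚ, ∃ N : ℕ, 1 ≤ N ∧ ∀ u ∈ V α,
    ((-(D * T) + (α : k) • (1 : Module.End k M)) ^ N) u ∈ VFilt.gt V α

/-- A `V`-filtration on `M`: a weak `V`-filtration such that each `V^α` is a finitely
generated `A0`-module and `T(V^α) = V^{α+1}` for `α > 0`. -/
structure IsVFiltration (T D : Module.End k M) (C : Set (Module.End k M))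
    (V : ℚ → Submodule k M) extends IsWeakVFiltration T D C V : Prop where
  /-- each `V^α` is a finitely generated `A0`-module: it is the smallest `A0`-stable
  `k`-subspace containing some finite set -/
  fg : ∀ α : ℚ, ∃ F : Finset M, (↑F : Set M) ⊆ (V α : Set M) ∧
    ∀ W : Submodule k M, (∀ a ∈ VFilt.A0 T D C, W.map a ≤ W) →
      (↑F : Set M) ⊆ (W : Set M) → V α ≤ W
  /-- `T(V^α) = V^{α+1}` for `α > 0` -/
  mapT_eq : ∀ α : ℚ, 0 < α → (V α).map T = V (α + 1)

end VFiltration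

section Graded

variable {k : Type*} [Field k] [CharZero k]
variable {M : Type*} [AddCommGroup M] [Module k M]

/-- The graded piece `Gr_V^α(M) = V^α / V^{>α}`. -/
abbrev VFilt.gr (V : ℚ → Submodule k M) (α : ℚ) :=
  V α ⧸ (VFilt.gt V α).comap (V α).subtype

/-- The `k`-linear map `Gr_V^α(M) → Gr_V^β(M)` induced by an endomorphism `g` with
`g(V^α) ⊆ V^β` and `g(V^{>α}) ⊆ V^{>β}`. -/
def VFilt.grInduced (V : ℚ → Submodule k M) (g : Module.End k M) (α β : ℚ)
    (h1 : ∀ x ∈ V α, g x ∈ V β)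
    (h2 : ∀ x ∈ VFilt.gt V α, g x ∈ VFilt.gt V β) :
    VFilt.gr V α →ₗ[k] VFilt.gr V β :=
  Submodule.mapQ _ _ (g.restrict h1) (fun x hx => h2 x.1 hx)

theorem IsWeakVFiltration.mapT_mem {T D : Module.End k M} {C : Set (Module.End k M)}
    {V : ℚ → Submodule k M} (hV : IsWeakVFiltration T D C V) {α : ℚ} {x : M}
    (hx : x ∈ V α) : T x ∈ V (α + 1) :=
  hV.mapT_le α (Submodule.mem_map_of_mem hx)

theorem IsWeakVFiltration.mapD_mem {T D : Module.End k M} {C : Set (Module.End k M)}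
    {V : ℚ → Submodule k M} (hV : IsWeakVFiltration T D C V) {α : ℚ} {x : M}
    (hx : x ∈ V (α + 1)) : D x ∈ V α := by
  have := hV.mapD_le (α + 1) (Submodule.mem_map_of_mem hx)
  simpa using this

theorem IsWeakVFiltration.gtMapT {T D : Module.End k M} {C : Set (Module.End k M)}
    {V : ℚ → Submodule k M} (hV : IsWeakVFiltration T D C V) {α : ℚ} {x : M}
    (hx : x ∈ VFilt.gt V α) : T x ∈ VFilt.gt V (α + 1) := by
  have hle : (VFilt.gt V α).map T ≤ VFilt.gt V (α + 1) := by
    unfold VFilt.gt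
    rw [Submodule.map_iSup]
    refine iSup_le fun β => ?_
    rw [Submodule.map_iSup]
    refine iSup_le fun hβ => le_trans (hV.mapT_le β) ?_
    exact le_iSup_of_le (β + 1) (le_iSup_of_le (by linarith) le_rfl)
  exact hle (Submodule.mem_map_of_mem hx)

theorem IsWeakVFiltration.gtMapD {T D : Module.End k M} {C : Set (Module.End k M)}
    {V : ℚ → Submodule k M} (hV : IsWeakVFiltration T D C V) {α : ℚ} {x : M}
    (hx : x ∈ VFilt.gt V (α + 1)) : D x ∈ VFilt.gt V α := by
  have hle : (VFilt.gt V (α + 1)).map D ≤ VFilt.gt V α := by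
    unfold VFilt.gt
    rw [Submodule.map_iSup]
    refine iSup_le fun β => ?_
    rw [Submodule.map_iSup]
    refine iSup_le fun hβ => le_trans (hV.mapD_le β) ?_
    exact le_iSup_of_le (β - 1) (le_iSup_of_le (by linarith) le_rfl)
  exact hle (Submodule.mem_map_of_mem hx)

end Graded

theorem bij_aux {k A B : Type*} [Field k] [AddCommGroup A] [Module k A]
    [AddCommGroup B] [Module k B] (f : A →ₗ[k] B) (g : B →ₗ[k] A) (c : k) (hc : c ≠ 0)
    (P : Module.End k A) (hP : ∀ x, P x = -(g (f x)) + c • x) (N : ℕ) (hN : ∀ x, (P ^ N) x = 0) :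
    Function.Injective f ∧ Function.Surjective g := by
  have hnil : IsNilpotent (-P) := (show IsNilpotent P from ⟨N, LinearMap.ext hN⟩).neg
  have hu : IsUnit (c • (1 : Module.End k A)) := by
    rw [← Algebra.algebraMap_eq_smul_one]
    exact (isUnit_iff_ne_zero.mpr hc).map _
  have hcomm : Commute (-P) (c • (1 : Module.End k A)) := (Commute.one_right _).smul_right c
  have h := hnil.isUnit_add_left_of_commute hu hcomm
  have hb := (Module.End.isUnit_iff _).1 h
  have he : ⇑(c • (1 : Module.End k A) + -P) = g ∘ f := by
    ext x
    simp [hP]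
  rw [he] at hb
  exact ⟨hb.1.of_comp, hb.2.of_comp⟩

theorem gr_pow_aux {k : Type*} [Field k] {M : Type*} [AddCommGroup M] [Module k M]
    (U W : Submodule k M) (Q : Module.End k M)
    (P : Module.End k (U ⧸ W.comap U.subtype))
    (hQ : ∀ x ∈ U, Q x ∈ U)
    (hP : ∀ x : U, P (Submodule.Quotient.mk x) = Submodule.Quotient.mk ⟨Q x, hQ x x.2⟩)
    (N : ℕ) (hN : ∀ u ∈ U, (Q ^ N) u ∈ W) (x) : (P ^ N) x = 0 := by
  have key : ∀ (n : ℕ) (u : U), ∃ h : (Q ^ n) u.1 ∈ U,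
      (P ^ n) (Submodule.Quotient.mk u) = Submodule.Quotient.mk ⟨(Q ^ n) u.1, h⟩ := by
    intro n u
    induction n with
    | zero => exact ⟨u.2, rfl⟩
    | succ n ih =>
      obtain ⟨h, e⟩ := ih
      simp only [pow_succ', Module.End.mul_apply]
      exact ⟨hQ _ h, by rw [e, hP]⟩
  obtain ⟨u, rfl⟩ := Submodule.Quotient.mk_surjective _ x
  obtain ⟨h, e⟩ := key N u
  rw [e, Submodule.Quotient.mk_eq_zero]
  exact hN u.1 u.2

/-- **Proposition 3.5.** For a weak `V`-filtration and `α ≠ 0`, the maps induced by `T`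
from `Gr_V^α` to `Gr_V^{α+1}` and by `D` from `Gr_V^{α+1}` to `Gr_V^α` are bijective. -/
theorem stmt2 {k : Type*} [Field k] [CharZero k]
    {M : Type*} [AddCommGroup M] [Module k M]
    (T D : Module.End k M) (C : Set (Module.End k M))
    (hweyl : D * T - T * D = 1)
    (hC : ∀ c ∈ C, Commute c T ∧ Commute c D)
    (V : ℚ → Submodule k M) (hV : IsWeakVFiltration T D C V)
    (α : ℚ) (hα : α ≠ 0) :
    Function.Bijective (VFilt.grInduced V T α (α + 1)
      (fun _ hx => hV.mapT_mem hx) (fun _ hx => hV.gtMapT hx)) ∧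
    Function.Bijective (VFilt.grInduced V D (α + 1) α
      (fun _ hx => hV.mapD_mem hx) (fun _ hx => hV.gtMapD hx)) := by
  have hw : ∀ x, D (T x) = T (D x) + x := fun x => by
    have := LinearMap.congr_fun hweyl x
    simp only [LinearMap.sub_apply, Module.End.mul_apply, Module.End.one_apply] at this
    exact (sub_eq_iff_eq_add'.mp this)
  have hc : (α : k) ≠ 0 := by exact_mod_cast hα
  have hS : ∀ (β : ℚ), ∀ x ∈ V β, (-(D * T) + (β : k) • (1 : Module.End k M)) x ∈ V β := by
    intro β x hx
    have h1 : D (T x) ∈ V β := hV.mapD_mem (hV.mapT_mem hx)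
    simp only [LinearMap.add_apply, LinearMap.neg_apply, Module.End.mul_apply,
      LinearMap.smul_apply, Module.End.one_apply]
    exact (V β).add_mem ((V β).neg_mem h1) ((V β).smul_mem _ hx)
  set f := VFilt.grInduced V T α (α + 1)
      (fun _ hx => hV.mapT_mem hx) (fun _ hx => hV.gtMapT hx) with hf
  set g := VFilt.grInduced V D (α + 1) α
      (fun _ hx => hV.mapD_mem hx) (fun _ hx => hV.gtMapD hx) with hg
  obtain ⟨N, -, hN⟩ := hV.nilpotent α
  obtain ⟨N', -, hN'⟩ := hV.nilpotent (α + 1)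
  have h1 := bij_aux f g (α : k) hc (-(g ∘ₗ f) + (α : k) • LinearMap.id) (fun x => rfl) N
    (gr_pow_aux (V α) (VFilt.gt V α) _ _ (hS α) (fun x => rfl) N hN)
  have h2 := bij_aux g f (α : k) hc (-(f ∘ₗ g) + (α : k) • LinearMap.id) (fun x => rfl) N'
    (gr_pow_aux (V (α + 1)) (VFilt.gt V (α + 1)) _ _ (hS (α + 1)) (fun x => by
      have e : (⟨_, hS (α + 1) x x.2⟩ : V (α + 1)) =
          -⟨T (D x), hV.mapT_mem (hV.mapD_mem x.2)⟩ + (α : k) • x := by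
        apply Subtype.ext
        simp [hw, add_smul]
        abel
      rw [e]
      rfl) N' hN')
  exact ⟨⟨h1.1, h2.2⟩, ⟨h2.1, h1.2⟩⟩
end

section
/- Let (V^α)_{α∈ℚ} be a weak V-filtration on M. If α ∈ ℚ satisfies α ≤ 0 and u ∈ M is such that T(u) ∈ V^{α+1}, then u ∈ V^α. In particular, every u ∈ M with T(u) = 0 lies in V^0. -/
open Module

/-- **Corollary 3.6(i).** If `α ≤ 0` and `T u ∈ V^{α+1}`, then `u ∈ V^α`; in particular
every `u` with `T u = 0` lies in `V^0`. -/
theorem stmt3 {k : Type*} [Field k] [CharZero k]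
    {M : Type*} [AddCommGroup M] [Module k M]
    (T D : Module.End k M) (C : Set (Module.End k M))
    (hweyl : D * T - T * D = 1)
    (hC : ∀ c ∈ C, Commute c T ∧ Commute c D)
    (V : ℚ → Submodule k M) (hV : IsWeakVFiltration T D C V) :
    (∀ α : ℚ, α ≤ 0 → ∀ u : M, T u ∈ V (α + 1) → u ∈ V α) ∧
    (∀ u : M, T u = 0 → u ∈ V 0) := by
  have key : ∀ α : ℚ, α ≤ 0 → ∀ u : M, T u ∈ V (α + 1) → u ∈ V α := by
    intro α hα u hu
    obtain ⟨l, hl, hdisc⟩ := hV.discrete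
    have hl' : (0 : ℚ) < l := by exact_mod_cast hl
    have hDT : D (T u) ∈ V α := by
      have := hV.mapD_le (α + 1) (Submodule.mem_map_of_mem hu)
      simpa using this
    have hS : ∀ w ∈ V α, D (T w) ∈ V α := by
      intro w hw
      have h1 : -(D * T) ∈ VFilt.A0 T D C :=
        Algebra.subset_adjoin (Or.inl (Or.inr rfl))
      have := hV.stable _ h1 α (Submodule.mem_map_of_mem hw)
      simpa using this
    have hpow : ∀ (b : k) (n : ℕ),
        ((-(D * T) + b • (1 : Module.End k M)) ^ n) u - b ^ n • u ∈ V α := by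
      intro b n
      induction n with
      | zero => simp
      | succ n ih =>
        set w := ((-(D * T) + b • (1 : Module.End k M)) ^ n) u with hw
        have e : ((-(D * T) + b • (1 : Module.End k M)) ^ (n + 1)) u - b ^ (n + 1) • u
            = -(D (T (w - b ^ n • u))) + b • (w - b ^ n • u) - b ^ n • D (T u) := by
          rw [pow_succ', Module.End.mul_apply, ← hw]
          simp only [LinearMap.add_apply, LinearMap.neg_apply, Module.End.mul_apply,
            LinearMap.smul_apply, Module.End.one_apply, map_sub, map_smul, smul_sub, smul_smul,
            pow_succ']
          abel
        rw [e]
        exact sub_mem (add_mem (neg_mem (hS _ ih)) (Submodule.smul_mem _ _ ih))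
          (Submodule.smul_mem _ _ hDT)
    have hgt : ∀ i : ℤ, VFilt.gt V ((i : ℚ) / l) ≤ V ((i + 1 : ℚ) / l) := by
      intro i
      refine iSup₂_le fun β hβ => ?_
      have hlt : (i : ℚ) / l < (i + 1 : ℚ) / l := by gcongr; linarith
      rcases le_total β ((i + 1 : ℚ) / l) with h | h
      · exact (hdisc i β _ ⟨hβ, h⟩ ⟨hlt, le_rfl⟩).le
      · exact hV.antitone h
    have step : ∀ i : ℤ, (i : ℚ) / l < α → u ∈ V ((i : ℚ) / l) → u ∈ V ((i + 1 : ℚ) / l) := by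
      intro i hi hui
      apply hgt i
      obtain ⟨N, -, hN⟩ := hV.nilpotent ((i : ℚ) / l)
      have h1 := hN u hui
      have h2 : V α ≤ VFilt.gt V ((i : ℚ) / l) := le_iSup₂_of_le α hi le_rfl
      have h3 := sub_mem h1 (h2 (hpow (((i : ℚ) / l : ℚ) : k) N))
      rw [sub_sub_cancel] at h3
      have hne : (((i : ℚ) / l : ℚ) : k) ^ N ≠ 0 :=
        pow_ne_zero _ (Rat.cast_ne_zero.mpr (by linarith))
      exact (Submodule.smul_mem_iff _ hne).mp h3
    obtain ⟨β, hβ⟩ := hV.exhaustive u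
    have h0 : u ∈ V (((min ⌊β * l⌋ ⌈α * l⌉ : ℤ) : ℚ) / l) := by
      refine hV.antitone ?_ hβ
      rw [div_le_iff₀ hl']
      exact le_trans (by exact_mod_cast min_le_left _ _) (Int.floor_le (β * l))
    have hind : ∀ i : ℤ, min ⌊β * l⌋ ⌈α * l⌉ ≤ i → i ≤ ⌈α * l⌉ → u ∈ V ((i : ℚ) / l) := by
      intro i hi
      induction i, hi using Int.le_induction with
      | base => intro _; exact h0
      | succ i _ ih =>
        intro h
        have := step i (by rw [div_lt_iff₀ hl']; exact Int.lt_ceil.mp (by omega)) (ih (by omega))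
        push_cast
        exact this
    refine hV.antitone ?_ (hind ⌈α * l⌉ (min_le_right _ _) le_rfl)
    rw [le_div_iff₀ hl']
    exact Int.le_ceil _
  exact ⟨key, fun u hu => key 0 le_rfl u (by rw [hu]; exact zero_mem _)⟩
end

section
/- Let (V^α)_{α∈ℚ} be a weak V-filtration on M. If α ∈ ℚ satisfies α ≤ 1 and v ∈ M is such that D(v) ∈ V^{α−1}, then v ∈ V^α. -/
open Module

/-- **Corollary 3.6(ii).** If `α ≤ 1` and `D v ∈ V^{α-1}`, then `v ∈ V^α`. -/
theorem stmt4 {k : Type*} [Field k] [CharZero k]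
    {M : Type*} [AddCommGroup M] [Module k M]
    (T D : Module.End k M) (C : Set (Module.End k M))
    (hweyl : D * T - T * D = 1)
    (hC : ∀ c ∈ C, Commute c T ∧ Commute c D)
    (V : ℚ → Submodule k M) (hV : IsWeakVFiltration T D C V) :
    ∀ α : ℚ, α ≤ 1 → ∀ v : M, D v ∈ V (α - 1) → v ∈ V α := by
  intro α hα v hv
  obtain ⟨l, hl, hd⟩ := hV.discrete
  have hl' : (0 : ℚ) < l := by exact_mod_cast hl
  have hgt : ∀ i : ℤ, VFilt.gt V ((i : ℚ) / l) ≤ V ((i + 1 : ℚ) / l) := by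
    intro i
    refine iSup₂_le fun β hβ => ?_
    by_cases h : β ≤ (i + 1 : ℚ) / l
    · exact (hd i β _ ⟨hβ, h⟩ ⟨lt_of_lt_of_le hβ h, le_refl _⟩).le
    · exact hV.antitone (le_of_not_ge h)
  have hS : ∀ β : ℚ, ∀ w ∈ V β, D (T w) ∈ V β := by
    intro β w hw
    have h1 : -(D * T) ∈ VFilt.A0 T D C := Algebra.subset_adjoin (by simp)
    have h2 := hV.stable _ h1 β (Submodule.mem_map_of_mem hw)
    simpa using h2
  have hTD : D (T v) - v ∈ V α := by
    have h1 := hV.mapT_le (α - 1) (Submodule.mem_map_of_mem hv)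
    have h2 := LinearMap.congr_fun hweyl v
    simp only [LinearMap.sub_apply, Module.End.mul_apply, Module.End.one_apply] at h2
    rw [sub_add_cancel] at h1
    have h3 : D (T v) - v = T (D v) := by
      rw [sub_eq_iff_eq_add] at h2 ⊢
      rw [h2, add_comm]
    rw [h3]; exact h1
  have step : ∀ i : ℤ, (i : ℚ) / l < α → v ∈ V ((i : ℚ) / l) →
      v ∈ V (min α ((i + 1 : ℚ) / l)) := by
    intro i hi hvi
    set γ : ℚ := (i : ℚ) / l with hγ
    set δ : ℚ := min α ((i + 1 : ℚ) / l) with hδ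
    obtain ⟨N, -, hN⟩ := hV.nilpotent γ
    have h1 := hV.antitone (min_le_right α _) (hgt i (hN v hvi))
    have h2 : D (T v) - v ∈ V δ := hV.antitone (min_le_left _ _) hTD
    have h3 : ∀ n : ℕ, ((-(D * T) + (γ : k) • (1 : Module.End k M)) ^ n) v
        - ((γ : k) - 1) ^ n • v ∈ V δ := by
      intro n
      induction n with
      | zero => simp
      | succ n ih =>
        have h4 := hS _ _ ih
        rw [pow_succ', Module.End.mul_apply]
        set w := ((-(D * T) + (γ : k) • (1 : Module.End k M)) ^ n) v
        have h5 := (V δ).add_mem ((V δ).neg_mem h4) ((V δ).smul_mem (γ : k) ih)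
        have h6 := (V δ).sub_mem h5 ((V δ).smul_mem (((γ : k) - 1) ^ n) h2)
        convert h6 using 1
        simp only [LinearMap.add_apply, LinearMap.neg_apply, Module.End.mul_apply,
          LinearMap.smul_apply, Module.End.one_apply, map_sub, map_smul, pow_succ]
        module
    have h4 := (V δ).sub_mem h1 (h3 N)
    rw [sub_sub_cancel] at h4
    have h5 : ((γ : k) - 1) ^ N ≠ 0 := by
      apply pow_ne_zero
      rw [sub_ne_zero]
      have : γ ≠ 1 := (lt_of_lt_of_le hi hα).ne
      exact_mod_cast this
    exact ((V δ).smul_mem_iff h5).1 h4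
  obtain ⟨γ, hγ⟩ := hV.exhaustive v
  have key : ∀ n : ℕ, v ∈ V (min α (((⌊γ * l⌋ + n : ℤ) : ℚ) / l)) := by
    intro n
    induction n with
    | zero =>
      refine hV.antitone ((min_le_right _ _).trans ?_) hγ
      rw [div_le_iff₀ hl']
      simpa using Int.floor_le (γ * l)
    | succ n ih =>
      by_cases h : (((⌊γ * l⌋ + n : ℤ) : ℚ) / l) < α
      · rw [min_eq_right h.le] at ih
        have := step _ h ih
        convert this using 4
        push_cast; ring
      · have h' := not_lt.1 h
        rw [min_eq_left h'] at ih
        exact hV.antitone (min_le_left _ _) ih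
  obtain ⟨n, hn⟩ := exists_nat_ge (α * l - ⌊γ * l⌋)
  have := key n
  rwa [min_eq_left] at this
  rw [le_div_iff₀ hl']
  push_cast
  linarith
end

section
/- Let (V^α)_{α∈ℚ} be a weak V-filtration on M. Then for every integer m ≥ 1 and every α ∈ ℚ with −m ≤ α < −m+1, one has the equality of k-subspaces V^α = D^m(V^{α+m}) + ∑_{j=0}^{m−1} D^j(V^0), where D^j(·) denotes the image subspace under the j-th iterate of D. -/
open Module

theorem VFilt.step {k : Type*} [Field k] [CharZero k]
    {M : Type*} [AddCommGroup M] [Module k M]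
    (T D : Module.End k M) (C : Set (Module.End k M))
    (V : ℚ → Submodule k M) (hV : IsWeakVFiltration T D C V) (α : ℚ) (hα : α < 0) :
    V α ≤ (V (α + 1)).map D ⊔ VFilt.gt V α := by
  obtain ⟨N, -, hN⟩ := hV.nilpotent α
  intro u hu
  have key : ∀ n : ℕ, ∀ u ∈ V α, ((-(D * T) + (α : k) • (1 : Module.End k M)) ^ n) u
      - (α : k) ^ n • u ∈ (V (α + 1)).map D := by
    intro n
    induction n with
    | zero => intro u hu; simp
    | succ n ih =>
      intro u hu
      have hS : (-(D * T)) u ∈ V α :=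
        hV.stable _ (Algebra.subset_adjoin (by simp)) α (Submodule.mem_map_of_mem hu)
      have hw : (-(D * T) + (α : k) • (1 : Module.End k M)) u ∈ V α := by
        simpa using (V α).add_mem hS ((V α).smul_mem (α : k) hu)
      have h1 := ih _ hw
      have h2 : D (T u) ∈ (V (α + 1)).map D :=
        Submodule.mem_map_of_mem (hV.mapT_le α (Submodule.mem_map_of_mem hu))
      have h3 := Submodule.sub_mem _ h1 (Submodule.smul_mem _ ((α : k) ^ n) h2)
      convert h3 using 1
      rw [pow_succ, Module.End.mul_apply]
      simp only [LinearMap.add_apply, LinearMap.neg_apply, Module.End.mul_apply,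
        LinearMap.smul_apply, Module.End.one_apply, smul_add, smul_neg, smul_smul, pow_succ]
      abel
  have h1 := key N u hu
  have h2 := hN u hu
  have hne : ((α : k) ^ N) ≠ 0 := pow_ne_zero _ (by exact_mod_cast hα.ne)
  have h3 : (α : k) ^ N • u ∈ (V (α + 1)).map D ⊔ VFilt.gt V α := by
    have := Submodule.sub_mem _ (Submodule.mem_sup_right h2 : _ ∈ (V (α + 1)).map D ⊔ VFilt.gt V α)
      (Submodule.mem_sup_left h1)
    simpa using this
  exact (Submodule.smul_mem_iff _ hne).1 h3

theorem VFilt.step0 {k : Type*} [Field k] [CharZero k]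
    {M : Type*} [AddCommGroup M] [Module k M]
    (T D : Module.End k M) (C : Set (Module.End k M))
    (V : ℚ → Submodule k M) (hV : IsWeakVFiltration T D C V) (α : ℚ) :
    V α ≤ (V (α + 1)).map D ⊔ V 0 := by
  obtain ⟨l, hl, hd⟩ := hV.discrete
  have hl' : (0 : ℚ) < l := by exact_mod_cast hl
  have key : ∀ n : ℕ, ∀ i : ℤ, -i ≤ n →
      V ((i : ℚ) / l) ≤ (V ((i : ℚ) / l + 1)).map D ⊔ V 0 := by
    intro n
    induction n with
    | zero =>
      intro i hi
      refine le_trans (hV.antitone ?_) le_sup_right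
      have : (0 : ℚ) ≤ i := by exact_mod_cast (by simpa using hi : 0 ≤ i)
      positivity
    | succ n ih =>
      intro i hi
      rcases le_or_gt 0 i with h0 | h0
      · refine le_trans (hV.antitone ?_) le_sup_right
        have : (0 : ℚ) ≤ i := by exact_mod_cast h0
        positivity
      · have hneg : (i : ℚ) / l < 0 := div_neg_of_neg_of_pos (by exact_mod_cast h0) hl'
        refine (VFilt.step T D C V hV _ hneg).trans (sup_le le_sup_left ?_)
        have hlt : (i : ℚ) / l < ((i + 1 : ℤ) : ℚ) / l := by
          push_cast; gcongr; linarith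
        have hgt : VFilt.gt V ((i : ℚ) / l) ≤ V (((i + 1 : ℤ) : ℚ) / l) := by
          refine iSup₂_le fun β hβ => ?_
          rcases le_total (((i + 1 : ℤ) : ℚ) / l) β with h | h
          · exact hV.antitone h
          · refine (hd i β _ ⟨hβ, ?_⟩ ⟨hlt, ?_⟩).le
            · simpa using h
            · simp
        refine hgt.trans ((ih (i + 1) (by push_cast at hi; omega)).trans ?_)
        exact sup_le_sup_right (Submodule.map_mono (hV.antitone (by linarith))) _
  have hc1 := Int.le_ceil (α * l)
  have hc2 := Int.ceil_lt_add_one (α * l)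
  set i := ⌈α * l⌉
  have ha : α ≤ (i : ℚ) / l := by rwa [le_div_iff₀ hl']
  have hb : ((i - 1 : ℤ) : ℚ) / l < α := by
    rw [div_lt_iff₀ hl']; push_cast; linarith
  have he : V α = V ((i : ℚ) / l) := by
    refine hd (i - 1) _ _ ⟨hb, ?_⟩ ⟨hb.trans_le ha, ?_⟩
    · simpa using ha
    · simp
  rw [he]
  refine (key (-i).toNat i (Int.self_le_toNat _)).trans ?_
  exact sup_le_sup_right (Submodule.map_mono (hV.antitone (by linarith))) _

theorem VFilt.mapPow {k : Type*} [Field k] [CharZero k]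
    {M : Type*} [AddCommGroup M] [Module k M]
    (T D : Module.End k M) (C : Set (Module.End k M))
    (V : ℚ → Submodule k M) (hV : IsWeakVFiltration T D C V) (α : ℚ) (j : ℕ) :
    (V α).map (D ^ j) ≤ V (α - j) := by
  induction j with
  | zero => simp [Module.End.one_eq_id]
  | succ j ih =>
    rw [pow_succ', Module.End.mul_eq_comp, Submodule.map_comp]
    refine (Submodule.map_mono ih).trans ((hV.mapD_le _).trans (hV.antitone ?_))
    push_cast; linarith

theorem VFilt.iter {k : Type*} [Field k] [CharZero k]
    {M : Type*} [AddCommGroup M] [Module k M]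
    (T D : Module.End k M) (C : Set (Module.End k M))
    (V : ℚ → Submodule k M) (hV : IsWeakVFiltration T D C V) (m : ℕ) : ∀ α : ℚ,
    V α ≤ (V (α + m)).map (D ^ m) ⊔ ⨆ j ∈ Finset.range m, (V 0).map (D ^ j) := by
  induction m with
  | zero => intro α; simp [Module.End.one_eq_id]
  | succ m ih =>
    intro α
    refine (VFilt.step0 T D C V hV α).trans (sup_le ?_ ?_)
    · refine (Submodule.map_mono (ih (α + 1))).trans ?_
      rw [Submodule.map_sup, ← Submodule.map_comp, ← Module.End.mul_eq_comp, ← pow_succ']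
      refine sup_le_sup (Submodule.map_mono (hV.antitone ?_)) ?_
      · push_cast; linarith
      · simp only [Submodule.map_iSup]
        refine iSup₂_le fun j hj => ?_
        rw [← Submodule.map_comp, ← Module.End.mul_eq_comp, ← pow_succ']
        exact le_iSup₂_of_le (j + 1) (by simpa using hj) le_rfl
    · refine le_sup_of_le_right (le_iSup₂_of_le 0 (by simp) ?_)
      simp [Module.End.one_eq_id]

/-- **Corollary 3.6(iii).** For `m ≥ 1` and `-m ≤ α < -m+1`, one has
`V^α = D^m(V^{α+m}) + ∑_{j=0}^{m-1} D^j(V^0)`. -/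
theorem stmt5 {k : Type*} [Field k] [CharZero k]
    {M : Type*} [AddCommGroup M] [Module k M]
    (T D : Module.End k M) (C : Set (Module.End k M))
    (hweyl : D * T - T * D = 1)
    (hC : ∀ c ∈ C, Commute c T ∧ Commute c D)
    (V : ℚ → Submodule k M) (hV : IsWeakVFiltration T D C V) :
    ∀ m : ℕ, 1 ≤ m → ∀ α : ℚ, -(m : ℚ) ≤ α → α < -(m : ℚ) + 1 →
      V α = (V (α + m)).map (D ^ m) ⊔ ⨆ j ∈ Finset.range m, (V 0).map (D ^ j) := by
  intro m hm α h1 h2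
  refine le_antisymm (VFilt.iter T D C V hV m α) (sup_le ?_ ?_)
  · refine (VFilt.mapPow T D C V hV _ m).trans (hV.antitone (by linarith))
  · refine iSup₂_le fun j hj => (VFilt.mapPow T D C V hV _ j).trans (hV.antitone ?_)
    have : ((j + 1 : ℕ) : ℚ) ≤ m := by exact_mod_cast Finset.mem_range.1 hj
    push_cast at this
    linarith
end

section
/- Assume that A0 is a left Noetherian ring and that (V^α)_{α∈ℚ} is a V-filtration on M. Then for every α ∈ ℚ with α > 0, the restriction of T to V^α is a bijection from V^α onto V^{α+1}. -/
open Module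

theorem VFilt.semi {k : Type*} [Field k] [CharZero k]
    {M : Type*} [AddCommGroup M] [Module k M]
    (T D : Module.End k M) (C : Set (Module.End k M))
    (hweyl : D * T - T * D = 1)
    (hC : ∀ c ∈ C, Commute c T ∧ Commute c D) (a : Module.End k M)
    (ha : a ∈ VFilt.A0 T D C) : ∃ b ∈ VFilt.A0 T D C, T * a = b * T := by
  unfold VFilt.A0 at ha
  induction ha using Algebra.adjoin_induction with
  | mem x hx =>
    rcases hx with (rfl | hx) | hx
    · exact ⟨x, Algebra.subset_adjoin (by simp), rfl⟩
    · rw [Set.mem_singleton_iff] at hx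
      subst hx
      refine ⟨-(D * T) + 1, add_mem (Algebra.subset_adjoin (by simp)) (one_mem _), ?_⟩
      rw [← hweyl]
      noncomm_ring
    · exact ⟨x, Algebra.subset_adjoin (Or.inr hx), (hC x hx).1.symm.eq⟩
  | algebraMap r =>
    exact ⟨algebraMap k _ r, Subalgebra.algebraMap_mem _ r, (Algebra.commutes r T).symm⟩
  | add x y _ _ hx hy =>
    obtain ⟨b, hb, e⟩ := hx
    obtain ⟨c, hc, f⟩ := hy
    exact ⟨b + c, add_mem hb hc, by rw [mul_add, add_mul, e, f]⟩
  | mul x y _ _ hx hy =>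
    obtain ⟨b, hb, e⟩ := hx
    obtain ⟨c, hc, f⟩ := hy
    exact ⟨b * c, mul_mem hb hc, by rw [← mul_assoc, e, mul_assoc, f, mul_assoc]⟩

theorem VFilt.semi_pow {k : Type*} [Field k] [CharZero k]
    {M : Type*} [AddCommGroup M] [Module k M]
    (T D : Module.End k M) (C : Set (Module.End k M))
    (hweyl : D * T - T * D = 1)
    (hC : ∀ c ∈ C, Commute c T ∧ Commute c D) (n : ℕ) : ∀ (a : Module.End k M)
    (_ : a ∈ VFilt.A0 T D C), ∃ b ∈ VFilt.A0 T D C, T ^ n * a = b * T ^ n := by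
  induction n with
  | zero => exact fun a ha => ⟨a, ha, by simp⟩
  | succ n ih =>
    intro a ha
    obtain ⟨b, hb, e⟩ := VFilt.semi T D C hweyl hC a ha
    obtain ⟨c, hc, f⟩ := ih b hb
    exact ⟨c, hc, by rw [pow_succ, mul_assoc, e, ← mul_assoc, f, mul_assoc]⟩

/-- The kernels of the powers of `T` on `V^α` stabilize. -/
theorem VFilt.stab {k : Type*} [Field k] [CharZero k]
    {M : Type*} [AddCommGroup M] [Module k M]
    (T D : Module.End k M) (C : Set (Module.End k M))
    (hweyl : D * T - T * D = 1)
    (hC : ∀ c ∈ C, Commute c T ∧ Commute c D)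
    (hNoeth : IsNoetherianRing ↥(VFilt.A0 T D C))
    (V : ℚ → Submodule k M) (hV : IsVFiltration T D C V) (α : ℚ) :
    ∃ n : ℕ, ∀ v ∈ V α, (T ^ (n + 1)) v = 0 → (T ^ n) v = 0 := by
  let P : Submodule (VFilt.A0 T D C) M :=
    { carrier := V α
      add_mem' := fun h h' => add_mem h h'
      zero_mem' := zero_mem _
      smul_mem' := fun a x hx =>
        hV.stable a.1 a.2 α (Submodule.mem_map_of_mem hx) }
  have hP : P.FG := by
    obtain ⟨F, hF, hF'⟩ := hV.fg α
    refine ⟨F, le_antisymm (Submodule.span_le.2 hF) ?_⟩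
    let W : Submodule k M :=
      { carrier := Submodule.span (VFilt.A0 T D C) (F : Set M)
        add_mem' := fun h h' => add_mem h h'
        zero_mem' := zero_mem _
        smul_mem' := fun r x hx => by
          have := Submodule.smul_mem _ (algebraMap k (VFilt.A0 T D C) r) hx
          have e : (algebraMap k (VFilt.A0 T D C) r) • x = r • x := rfl
          rw [e] at this
          exact this }
    refine hF' W ?_ Submodule.subset_span
    rintro a ha _ ⟨x, hx, rfl⟩
    exact Submodule.smul_mem _ (⟨a, ha⟩ : VFilt.A0 T D C) hx
  have hN : IsNoetherian (VFilt.A0 T D C) P := isNoetherian_of_fg_of_noetherian P hP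
  let K : ℕ →o Submodule (VFilt.A0 T D C) P :=
    { toFun := fun n =>
        { carrier := {x | (T ^ n) x.1 = 0}
          add_mem' := fun {x y} h h' => by
            simp only [Set.mem_ofPred_eq] at h h' ⊢
            simp [h, h']
          zero_mem' := by simp
          smul_mem' := fun a x hx => by
            obtain ⟨b, -, e⟩ := VFilt.semi_pow T D C hweyl hC n a.1 a.2
            have := LinearMap.congr_fun e x.1
            change (T ^ n) (a.1 x.1) = 0
            rw [Module.End.mul_apply, Module.End.mul_apply] at this
            rw [this, show (T ^ n) x.1 = 0 from hx, map_zero] }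
      monotone' := monotone_nat_of_le_succ fun n x hx => by
        change (T ^ (n + 1)) x.1 = 0
        rw [pow_succ', Module.End.mul_apply, show (T ^ n) x.1 = 0 from hx, map_zero] }
  obtain ⟨n, hn⟩ := monotone_stabilizes_iff_noetherian.2 hN K
  refine ⟨n, fun v hv h => ?_⟩
  have h1 : (⟨v, hv⟩ : P) ∈ K (n + 1) := h
  rw [← hn (n + 1) (Nat.le_succ n)] at h1
  exact h1

theorem VFilt.ker_mem {k : Type*} [Field k] [CharZero k]
    {M : Type*} [AddCommGroup M] [Module k M]
    (T D : Module.End k M) (C : Set (Module.End k M))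
    (V : ℚ → Submodule k M) (hV : IsVFiltration T D C V) (α : ℚ) (hα : 0 < α)
    (u : M) (hu : u ∈ V α) (hT : T u = 0) (β : ℚ) : u ∈ V β := by
  obtain ⟨l, hl, hd⟩ := hV.discrete
  have hl' : (0 : ℚ) < l := by exact_mod_cast hl
  -- membership improves from any positive index
  have key : ∀ γ : ℚ, 0 < γ → u ∈ V γ → u ∈ VFilt.gt V γ := by
    intro γ hγ hm
    obtain ⟨N, -, h⟩ := hV.nilpotent γ
    have h2 := h u hm
    have e : ∀ n : ℕ, ((-(D * T) + (γ : k) • (1 : Module.End k M)) ^ n) u = (γ : k) ^ n • u := by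
      intro n
      induction n with
      | zero => simp
      | succ n ih =>
        rw [pow_succ', Module.End.mul_apply, ih]
        simp [hT, pow_succ', mul_smul]
        rw [smul_comm]
    rw [e] at h2
    have hne : (γ : k) ^ N ≠ 0 := pow_ne_zero _ (by exact_mod_cast hγ.ne')
    exact (Submodule.smul_mem_iff _ hne).1 h2
  have gtle : ∀ i : ℤ, VFilt.gt V ((i : ℚ) / l) ≤ V ((i + 1 : ℚ) / l) := by
    intro i
    refine iSup₂_le fun γ hγ => ?_
    by_cases h : γ ≤ (i + 1 : ℚ) / l
    · refine (hd i _ _ ⟨hγ, h⟩ ⟨?_, le_rfl⟩).le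
      gcongr
      linarith
    · exact hV.antitone (not_le.1 h).le
  -- the starting index
  have step : ∀ n : ℕ, u ∈ V (((⌈α * l⌉ + n : ℤ) : ℚ) / l) := by
    intro n
    induction n with
    | zero =>
      have h1 := Int.ceil_lt_add_one (α * l)
      have h2 := Int.le_ceil (α * l)
      have e := hd (⌈α * l⌉ - 1) α ((⌈α * l⌉ : ℚ) / l)
        ⟨by rw [div_lt_iff₀ hl']; push_cast; linarith,
          by rw [le_div_iff₀ hl']; push_cast; linarith⟩
        ⟨by gcongr; push_cast; linarith, by gcongr; push_cast; linarith⟩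
      rw [e] at hu
      simpa using hu
    | succ n ih =>
      have hc : 0 < ⌈α * l⌉ := Int.ceil_pos.2 (by positivity)
      have hp : (0 : ℚ) < ((⌈α * l⌉ + n : ℤ) : ℚ) / l := by
        have : (0 : ℚ) < ((⌈α * l⌉ + n : ℤ) : ℚ) := by
          exact_mod_cast (by omega : (0 : ℤ) < ⌈α * l⌉ + n)
        positivity
      have := gtle _ (key _ hp ih)
      convert this using 3
      push_cast
      ring
  obtain ⟨n, hn⟩ := exists_nat_ge (β * l)
  refine hV.antitone ?_ (step n)
  rw [le_div_iff₀ hl']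
  have hc : (0 : ℚ) < (⌈α * l⌉ : ℚ) := by
    exact_mod_cast Int.ceil_pos.2 (by positivity : (0 : ℚ) < α * l)
  push_cast
  linarith

theorem VFilt.pow_surj {k : Type*} [Field k] [CharZero k]
    {M : Type*} [AddCommGroup M] [Module k M]
    (T D : Module.End k M) (C : Set (Module.End k M))
    (V : ℚ → Submodule k M) (hV : IsVFiltration T D C V) (α : ℚ) (hα : 0 < α) (n : ℕ) :
    ∀ u ∈ V (α + n), ∃ v ∈ V α, (T ^ n) v = u := by
  induction n with
  | zero => intro u hu; exact ⟨u, by simpa using hu, by simp⟩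
  | succ n ih =>
    intro u hu
    have e := hV.mapT_eq (α + n) (by positivity)
    rw [show α + ((n + 1 : ℕ) : ℚ) = α + n + 1 by push_cast; ring, ← e] at hu
    obtain ⟨w, hw, rfl⟩ := hu
    obtain ⟨v, hv, rfl⟩ := ih w hw
    exact ⟨v, hv, by rw [pow_succ', Module.End.mul_apply]⟩

/-- **Proposition 3.7(i).** If `A0` is left Noetherian and `V` is a `V`-filtration on `M`,
then for every `α > 0` the restriction of `T` is a bijection from `V^α` onto `V^{α+1}`. -/
theorem stmt6 {k : Type*} [Field k] [CharZero k]
    {M : Type*} [AddCommGroup M] [Module k M]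
    (T D : Module.End k M) (C : Set (Module.End k M))
    (hweyl : D * T - T * D = 1)
    (hC : ∀ c ∈ C, Commute c T ∧ Commute c D)
    (hNoeth : IsNoetherianRing ↥(VFilt.A0 T D C))
    (V : ℚ → Submodule k M) (hV : IsVFiltration T D C V) :
    ∀ α : ℚ, 0 < α → Set.BijOn (⇑T) (V α : Set M) (V (α + 1) : Set M) := by
  intro α hα
  have e := hV.mapT_eq α hα
  refine ⟨fun x hx => hV.mapT_le α (Submodule.mem_map_of_mem hx), ?_, ?_⟩
  · intro x hx y hy hxy
    rw [← sub_eq_zero]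
    have hT : T (x - y) = 0 := by rw [map_sub, hxy, sub_self]
    obtain ⟨n, hn⟩ := VFilt.stab T D C hweyl hC hNoeth V hV α
    have hm := VFilt.ker_mem T D C V hV α hα (x - y) (sub_mem hx hy) hT (α + n)
    obtain ⟨v, hv, h⟩ := VFilt.pow_surj T D C V hV α hα n _ hm
    rw [← h]
    refine hn v hv ?_
    rw [pow_succ', Module.End.mul_apply, h, hT]
  · intro y hy
    have hy' : y ∈ (V α).map T := by rw [e]; exact hy
    exact hy'
end

section
/- If (V^α)_{α∈ℚ} and (Ṽ^α)_{α∈ℚ} are both V-filtrations on M (with respect to the same data T, D, C), then V^α = Ṽ^α for every α ∈ ℚ. In other words, M admits at most one V-filtration. -/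
open Module

section Helpers

variable {k : Type*} [Field k] [CharZero k]
variable {M : Type*} [AddCommGroup M] [Module k M]

theorem VFilt.gt_eq {T D : Module.End k M} {C : Set (Module.End k M)} {V : ℚ → Submodule k M}
    (hV : IsWeakVFiltration T D C V) :
    ∃ ℓ : ℕ, 0 < ℓ ∧ ∀ (i : ℤ) (β : ℚ), (i : ℚ) / ℓ ≤ β → β < (i + 1 : ℚ) / ℓ →
      VFilt.gt V β = V ((i + 1 : ℚ) / ℓ) := by
  obtain ⟨ℓ, hℓ, h⟩ := hV.discrete
  refine ⟨ℓ, hℓ, fun i β h1 h2 => le_antisymm ?_ ?_⟩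
  · refine iSup₂_le fun γ hγ => ?_
    rcases le_total γ ((i + 1 : ℚ) / ℓ) with hle | hle
    · exact (h i γ _ ⟨lt_of_le_of_lt h1 hγ, hle⟩ ⟨lt_of_le_of_lt h1 h2, le_rfl⟩).le
    · exact hV.antitone hle
  · exact le_iSup₂_of_le _ h2 le_rfl

theorem VFilt.exists_gt {T D : Module.End k M} {C : Set (Module.End k M)} {V : ℚ → Submodule k M}
    (hV : IsWeakVFiltration T D C V) (α : ℚ) : ∃ γ, α < γ ∧ VFilt.gt V α = V γ := by
  obtain ⟨ℓ, hℓ, h⟩ := VFilt.gt_eq hV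
  have hl : (0 : ℚ) < ℓ := by exact_mod_cast hℓ
  have h1 : ((⌊α * ℓ⌋ : ℤ) : ℚ) / ℓ ≤ α := by
    rw [div_le_iff₀ hl]; exact Int.floor_le _
  have h2 : α < ((⌊α * ℓ⌋ : ℤ) + 1 : ℚ) / ℓ := by
    rw [lt_div_iff₀ hl]; exact Int.lt_floor_add_one _
  exact ⟨_, h2, h _ _ h1 h2⟩

theorem VFilt.induct {T D : Module.End k M} {C : Set (Module.End k M)} {V : ℚ → Submodule k M}
    (hV : IsWeakVFiltration T D C V) (Q : ℚ → Prop) (anti : ∀ β γ, β ≤ γ → Q γ → Q β)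
    (β₀ : ℚ) (h0 : Q β₀) (α : ℚ)
    (step : ∀ β < α, Q β → ∀ γ, β < γ → VFilt.gt V β = V γ → Q γ) : Q α := by
  obtain ⟨ℓ, hℓ, h⟩ := VFilt.gt_eq hV
  have hl : (0 : ℚ) < ℓ := by exact_mod_cast hℓ
  have key : ∀ n : ℕ, Q (min α (((⌊β₀ * ℓ⌋ + n : ℤ) : ℚ) / ℓ)) := by
    intro n
    induction n with
    | zero =>
      refine anti _ β₀ ?_ h0
      refine (min_le_right _ _).trans ?_
      rw [div_le_iff₀ hl]
      simpa using Int.floor_le (β₀ * ℓ)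
    | succ n ih =>
      rcases le_or_gt α (((⌊β₀ * ℓ⌋ + n : ℤ) : ℚ) / ℓ) with hle | hlt
      · rw [min_eq_left hle] at ih
        exact anti _ _ (min_le_left _ _) ih
      · rw [min_eq_right hlt.le] at ih
        have hlt2 : (((⌊β₀ * ℓ⌋ + n : ℤ) : ℚ) / ℓ) < (((⌊β₀ * ℓ⌋ + n : ℤ) : ℚ) + 1) / ℓ := by
          gcongr; linarith
        have := step _ hlt ih _ hlt2 (h _ _ le_rfl hlt2)
        refine anti _ _ ?_ this
        refine (min_le_right _ _).trans (le_of_eq ?_)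
        push_cast; ring
  obtain ⟨n, hn⟩ := exists_nat_ge (α * ℓ - ⌊β₀ * ℓ⌋)
  have := key n
  rwa [min_eq_left] at this
  rw [le_div_iff₀ hl]
  push_cast; linarith

theorem VFilt.aeval_mem_A0 (T D : Module.End k M) (C : Set (Module.End k M)) (p : Polynomial k) :
    Polynomial.aeval (-(D * T)) p ∈ VFilt.A0 T D C := by
  have h := Polynomial.aeval_mem_adjoin_singleton k (p := p) (-(D * T))
  refine Algebra.adjoin_mono ?_ h
  intro x hx
  left; right; exact hx

theorem VFilt.split {T D : Module.End k M} {C : Set (Module.End k M)} {V V' : ℚ → Submodule k M}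
    (hV : IsWeakVFiltration T D C V) (hV' : IsWeakVFiltration T D C V') {α β : ℚ} (hne : α ≠ β) :
    V α ⊓ V' β ≤ VFilt.gt V α ⊔ (V α ⊓ VFilt.gt V' β) := by
  rintro u ⟨hu, hu'⟩
  obtain ⟨N, -, hN⟩ := hV.nilpotent α
  obtain ⟨N', -, hN'⟩ := hV'.nilpotent β
  obtain ⟨γ, -, hγ⟩ := VFilt.exists_gt hV α
  obtain ⟨γ', -, hγ'⟩ := VFilt.exists_gt hV' β
  have hcop : IsCoprime ((Polynomial.X + Polynomial.C (α : k)) ^ N)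
      ((Polynomial.X + Polynomial.C (β : k)) ^ N') := by
    apply IsCoprime.pow
    have := Polynomial.isCoprime_X_sub_C_of_isUnit_sub (R := k) (a := -(α : k)) (b := -(β : k))
      (by
        rw [isUnit_iff_ne_zero]
        intro h
        apply hne
        have : (α : k) = β := by linear_combination -h
        exact_mod_cast this)
    simpa using this
  have hev : ∀ (δ : ℚ) (n : ℕ), Polynomial.aeval (-(D * T))
      ((Polynomial.X + Polynomial.C (δ : k)) ^ n) =
      (-(D * T) + (δ : k) • (1 : Module.End k M)) ^ n := by
    intro δ n
    simp [Algebra.algebraMap_eq_smul_one]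
  obtain ⟨a, b, hab⟩ := hcop
  have hab' := congrArg (fun p => Polynomial.aeval (-(D * T)) p u) hab
  simp only [map_add, map_mul, map_one, hev, LinearMap.add_apply, Module.End.mul_apply,
    Module.End.one_apply] at hab'
  have hst : ∀ {W : ℚ → Submodule k M}, IsWeakVFiltration T D C W → ∀ (p : Polynomial k) (δ : ℚ)
      (x : M), x ∈ W δ → Polynomial.aeval (-(D * T)) p x ∈ W δ := fun hW p δ x hx =>
    hW.stable _ (VFilt.aeval_mem_A0 T D C p) δ (Submodule.mem_map_of_mem hx)
  rw [hγ, hγ', ← hab']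
  refine Submodule.add_mem_sup (hst hV _ _ _ (hγ ▸ hN u hu)) ⟨hst hV _ _ _ ?_, 
    hst hV' _ _ _ (hγ' ▸ hN' u hu')⟩
  rw [← hev]
  exact hst hV _ _ _ hu

theorem VFilt.exists_le {T D : Module.End k M} {C : Set (Module.End k M)} {V V' : ℚ → Submodule k M}
    (hV : IsVFiltration T D C V) (hV' : IsWeakVFiltration T D C V') (α : ℚ) :
    ∃ β, V α ≤ V' β := by
  obtain ⟨F, -, hF⟩ := hV.fg α
  choose f hf using hV'.exhaustive
  obtain ⟨b, hb⟩ := (F.image f).bddBelow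
  refine ⟨b, hF _ (fun a ha => hV'.stable a ha b) fun x hx => ?_⟩
  exact hV'.antitone (hb (by simpa using ⟨x, hx, rfl⟩)) (hf x)

theorem VFilt.le {T D : Module.End k M} {C : Set (Module.End k M)} {V V' : ℚ → Submodule k M}
    (hV : IsVFiltration T D C V) (hV' : IsWeakVFiltration T D C V') (α : ℚ) : V α ≤ V' α := by
  have hW := hV.toIsWeakVFiltration
  -- first step
  have h1 : ∀ α, V α ≤ VFilt.gt V α ⊔ V' α := by
    intro α
    have : V α ≤ VFilt.gt V α ⊔ (V α ⊓ V' α) := by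
      obtain ⟨β₀, h0⟩ := VFilt.exists_le hV hV' α
      refine VFilt.induct hV' (fun β => V α ≤ VFilt.gt V α ⊔ (V α ⊓ V' β)) ?_ β₀ ?_ α ?_
      · intro β γ hβγ h
        exact h.trans (sup_le_sup_left (inf_le_inf_left _ (hV'.antitone hβγ)) _)
      · exact le_sup_of_le_right (le_inf le_rfl h0)
      · intro β hβ h γ _ hγ
        have := VFilt.split hW hV' hβ.ne'
        rw [hγ] at this
        exact h.trans (sup_le le_sup_left this)
    exact this.trans (sup_le_sup_left inf_le_right _)
  -- second step
  have h2 : ∀ γ, V α ≤ V γ ⊔ V' α := by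
    intro γ
    refine VFilt.induct hW (fun β => V α ≤ V β ⊔ V' α) ?_ α le_sup_left γ ?_
    · intro β γ hβγ h
      exact h.trans (sup_le_sup_right (hW.antitone hβγ) _)
    · intro β _ h δ _ hδ
      rcases lt_or_ge β α with hlt | hge
      · refine le_sup_of_le_left ?_
        rw [← hδ]
        exact le_iSup₂_of_le α hlt le_rfl
      · have := h1 β
        rw [hδ] at this
        exact h.trans (sup_le (this.trans (sup_le_sup_left (hV'.antitone hge) _)) le_sup_right)
  -- large indices
  obtain ⟨β, hβ⟩ := VFilt.exists_le hV hV' 1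
  have h3 : ∀ m : ℕ, V (1 + m) ≤ V' (β + m) := by
    intro m
    induction m with
    | zero => simpa using hβ
    | succ m ih =>
      have e := hV.mapT_eq (1 + m) (by positivity)
      have e2 := (Submodule.map_mono (f := T) ih).trans (hV'.mapT_le _)
      rw [e] at e2
      push_cast
      simpa [add_assoc] using e2
  obtain ⟨m, hm⟩ := exists_nat_ge (α - β)
  exact (h2 (1 + m)).trans (sup_le ((h3 m).trans (hV'.antitone (by linarith))) le_rfl)

end Helpers

/-- **Proposition 3.8.** `M` admits at most one `V`-filtration. -/
theorem stmt7 {k : Type*} [Field k] [CharZero k]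
    {M : Type*} [AddCommGroup M] [Module k M]
    (T D : Module.End k M) (C : Set (Module.End k M))
    (hweyl : D * T - T * D = 1)
    (hC : ∀ c ∈ C, Commute c T ∧ Commute c D)
    (V V' : ℚ → Submodule k M)
    (hV : IsVFiltration T D C V) (hV' : IsVFiltration T D C V') :
    ∀ α : ℚ, V α = V' α := by
  intro α
  exact le_antisymm (VFilt.le hV hV'.toIsWeakVFiltration α)
    (VFilt.le hV' hV.toIsWeakVFiltration α)
end

section
/- The following hold: (i) T(N_i) ⊆ N_{i+1} and D(N_i) ⊆ N_{i−1} for every integer i; (ii) N_i = 0 for every integer i > 0, and M is the internal direct sum of the subspaces N_{−m} for m ≥ 0 (the family (N_{−m})_{m≥0} is independent and its sum is all of M); (iii) N_{−m} = D^m(N_0) for every integer m ≥ 0. -/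
/-- **Example 3.9 (steps in Kashiwara's Equivalence Theorem).** Let `T`, `D` satisfy the
Weyl relation, with every element of `M` annihilated by a power of `T`, and set
`N_i = ker(S + i·id)` where `S = -(D∘T)`. Then:
(i) `T(N_i) ⊆ N_{i+1}` and `D(N_i) ⊆ N_{i-1}`;
(ii) `N_i = 0` for `i > 0` and `M = ⊕_{m ≥ 0} N_{-m}` (internal direct sum);
(iii) `N_{-m} = D^m(N_0)` for every `m ≥ 0`. -/
theorem stmt8 {k : Type*} [Field k] [CharZero k]
    {M : Type*} [AddCommGroup M] [Module k M]
    (T D : Module.End k M) (hweyl : D * T - T * D = 1)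
    (htors : ∀ u : M, ∃ m : ℕ, (T ^ m) u = 0)
    (N : ℤ → Submodule k M)
    (hN : ∀ i : ℤ, N i = LinearMap.ker (-(D * T) + (i : k) • (1 : Module.End k M))) :
    (∀ i : ℤ, (N i).map T ≤ N (i + 1) ∧ (N i).map D ≤ N (i - 1)) ∧
    ((∀ i : ℤ, 0 < i → N i = ⊥) ∧ DirectSum.IsInternal fun m : ℕ => N (-(m : ℤ))) ∧
    (∀ m : ℕ, N (-(m : ℤ)) = (N 0).map (D ^ m)) := by
  have hw : ∀ u, D (T u) = T (D u) + u := by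
    intro u
    have h := LinearMap.congr_fun hweyl u
    simp only [LinearMap.sub_apply, Module.End.mul_apply, Module.End.one_apply] at h
    rw [← sub_eq_iff_eq_add', h]
  have mem : ∀ (i : ℤ) (u : M), u ∈ N i ↔ D (T u) = (i : k) • u := by
    intro i u
    rw [hN, LinearMap.mem_ker]
    simp only [LinearMap.add_apply, LinearMap.neg_apply, Module.End.mul_apply,
      LinearMap.smul_apply, Module.End.one_apply]
    rw [neg_add_eq_zero]
  have hT : ∀ (i : ℤ) (u : M), u ∈ N i → T u ∈ N (i + 1) := by
    intro i u hu
    rw [mem] at hu ⊢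
    rw [hw (T u), hu, map_smul]
    push_cast
    rw [add_smul, one_smul]
  have hD : ∀ (i : ℤ) (u : M), u ∈ N i → D u ∈ N (i - 1) := by
    intro i u hu
    rw [mem] at hu ⊢
    have h1 : T (D u) = (i : k) • u - u := by rw [← hu, hw u]; abel
    rw [h1, map_sub, map_smul]
    push_cast
    rw [sub_smul, one_smul]
  have hpos : ∀ (m : ℕ) (i : ℤ) (u : M), 0 < i → u ∈ N i → (T ^ m) u = 0 → u = 0 := by
    intro m
    induction m with
    | zero => intro i u _ _ h; simpa using h
    | succ m ih =>
      intro i u hi hu h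
      have h0 : T u = 0 := ih (i + 1) (T u) (by omega) (hT i u hu) (by
        rwa [pow_succ, Module.End.mul_apply] at h)
      rw [mem, h0, map_zero] at hu
      rcases smul_eq_zero.1 hu.symm with h2 | h2
      · exact absurd (Int.cast_eq_zero.1 h2) hi.ne'
      · exact h2
  have hlift : ∀ v ∈ (⨆ m : ℕ, N (-(m : ℤ))), ∃ w ∈ (⨆ m : ℕ, N (-(m : ℤ))), T w = v := by
    intro v hv
    induction hv using Submodule.iSup_induction' with
    | mem j x hx =>
      have hj : ((j : k) + 1) ≠ 0 := by exact_mod_cast Nat.succ_ne_zero j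
      refine ⟨(-((j : k) + 1)⁻¹) • D x, Submodule.smul_mem _ _ ?_, ?_⟩
      · refine Submodule.mem_iSup_of_mem (j + 1) ?_
        have := hD _ _ hx
        convert this using 2
        push_cast; ring
      · rw [mem] at hx
        have h1 : T (D x) = (-((j : k) + 1)) • x := by
          have h2 : T (D x) = D (T x) - x := by rw [hw x]; abel
          rw [h2, hx]
          push_cast
          module
        rw [map_smul, h1, smul_smul, neg_mul_neg, inv_mul_cancel₀ hj, one_smul]
    | zero => exact ⟨0, zero_mem _, map_zero _⟩
    | add x y _ _ hx hy =>
      obtain ⟨a, ha, rfl⟩ := hx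
      obtain ⟨b, hb, rfl⟩ := hy
      exact ⟨a + b, add_mem ha hb, map_add _ _ _⟩
  have hspan : ∀ (m : ℕ) (u : M), (T ^ m) u = 0 → u ∈ (⨆ m : ℕ, N (-(m : ℤ))) := by
    intro m
    induction m with
    | zero =>
      intro u h
      have : u = 0 := by simpa using h
      rw [this]; exact zero_mem _
    | succ m ih =>
      intro u h
      rw [pow_succ, Module.End.mul_apply] at h
      obtain ⟨w, hw1, hw2⟩ := hlift _ (ih _ h)
      have h0 : u - w ∈ (⨆ m : ℕ, N (-(m : ℤ))) := by
        refine Submodule.mem_iSup_of_mem 0 ?_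
        rw [mem, map_sub, hw2]
        simp
      simpa using add_mem h0 hw1
  refine ⟨fun i => ⟨?_, ?_⟩, ⟨?_, ?_⟩, ?_⟩
  · rintro _ ⟨u, hu, rfl⟩
    exact hT i u hu
  · rintro _ ⟨u, hu, rfl⟩
    exact hD i u hu
  · intro i hi
    rw [eq_bot_iff]
    intro u hu
    obtain ⟨m, hm⟩ := htors u
    exact hpos m i u hi hu hm
  · rw [DirectSum.isInternal_submodule_iff_iSupIndep_and_iSup_eq_top]
    constructor
    · have h := (Module.End.eigenspaces_iSupIndep (D * T)).comp
        (f := fun m : ℕ => ((-(m : ℤ) : ℤ) : k)) (by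
          intro a b hab
          simpa using hab)
      convert h using 1
      funext m
      ext u
      rw [mem, Function.comp_apply, Module.End.mem_eigenspace_iff, Module.End.mul_apply]
    · rw [eq_top_iff]
      intro u _
      obtain ⟨m, hm⟩ := htors u
      exact hspan m u hm
  · intro m
    induction m with
    | zero => simp [Module.End.one_eq_id]
    | succ m ih =>
      rw [pow_succ', Module.End.mul_eq_comp, Submodule.map_comp, ← ih]
      apply le_antisymm
      · intro u hu
        have hj : ((m : k) + 1) ≠ 0 := by exact_mod_cast Nat.succ_ne_zero m
        refine ⟨(-((m : k) + 1)⁻¹) • T u, Submodule.smul_mem _ _ ?_, ?_⟩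
        · have := hT _ _ hu
          convert this using 2
          push_cast; ring
        · rw [mem] at hu
          rw [map_smul, hu, smul_smul]
          push_cast
          rw [neg_mul_comm, neg_neg, inv_mul_cancel₀ hj, one_smul]
      · rintro _ ⟨u, hu, rfl⟩
        have := hD _ _ hu
        convert this using 2
        push_cast; ring
end

section
/- Let (V^α)_{α∈ℚ} be a V-filtration on M. Then M = V^1 + T(M) and V^1 ∩ T(M) = T(V^0); equivalently, the natural k-linear map V^1/T(V^0) → M/T(M) induced by the inclusion V^1 ⊆ M is an isomorphism. -/
open Module

theorem VFilt.pow_expand {k : Type*} [Field k] {M : Type*} [AddCommGroup M] [Module k M]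
    (A : Subalgebra k (Module.End k M)) (f : Module.End k M) (hf : f ∈ A) (a : k) (N : ℕ) :
    ∃ q ∈ A, (f + a • (1 : Module.End k M)) ^ N = a ^ N • (1 : Module.End k M) + q * f := by
  induction N with
  | zero => exact ⟨0, A.zero_mem, by simp⟩
  | succ N ih =>
    obtain ⟨q, hq, h⟩ := ih
    refine ⟨a ^ N • 1 + q * f + a • q, ?_, ?_⟩
    · exact A.add_mem (A.add_mem (A.smul_mem A.one_mem _) (A.mul_mem hq hf)) (A.smul_mem hq _)
    · rw [pow_succ, h]
      simp only [add_mul, mul_add, smul_mul_assoc, mul_smul_comm, one_mul, mul_one, pow_succ,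
        mul_smul, smul_add]
      rw [smul_comm (a ^ N) a]
      abel

theorem VFilt.descend {k : Type*} [Field k] {M : Type*} [AddCommGroup M] [Module k M]
    (V : ℚ → Submodule k M) (hanti : Antitone V) (hex : ∀ m : M, ∃ α : ℚ, m ∈ V α)
    (hd : ∃ ℓ : ℕ, 0 < ℓ ∧ ∀ (i : ℤ) (α β : ℚ),
      α ∈ Set.Ioc ((i : ℚ) / ℓ) ((i + 1 : ℚ) / ℓ) →
      β ∈ Set.Ioc ((i : ℚ) / ℓ) ((i + 1 : ℚ) / ℓ) → V α = V β)
    (c : ℤ) (Q P : Submodule k M) (h0 : V c ⊓ Q ≤ P)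
    (hs : ∀ α < (c : ℚ), VFilt.gt V α ⊓ Q ≤ P → V α ⊓ Q ≤ P) : Q ≤ P := by
  obtain ⟨l, hl, hd⟩ := hd
  have hl' : (0 : ℚ) < l := by exact_mod_cast hl
  have hgt : ∀ i : ℤ, VFilt.gt V ((i : ℚ) / l) ≤ V ((i + 1 : ℚ) / l) := by
    intro i
    refine iSup₂_le fun β hβ => ?_
    have hlt : (i : ℚ) / l < (i + 1 : ℚ) / l := by gcongr; linarith
    rcases le_total β ((i + 1 : ℚ) / l) with h | h
    · exact (hd i β _ ⟨hβ, h⟩ ⟨hlt, le_rfl⟩).le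
    · exact hanti h
  have key : ∀ n : ℕ, V (((c * l - n : ℤ) : ℚ) / l) ⊓ Q ≤ P := by
    intro n
    induction n with
    | zero =>
      have : (((c * l - (0 : ℕ) : ℤ) : ℚ) / l) = c := by push_cast; field_simp; ring
      rw [this]; exact h0
    | succ n ih =>
      apply hs
      · rw [div_lt_iff₀ hl']; push_cast; linarith [(Nat.cast_nonneg n : (0 : ℚ) ≤ n)]
      · refine le_trans (inf_le_inf_right _ (hgt _)) ?_
        have e : (((c * l - (n + 1 : ℕ) : ℤ) : ℚ) + 1) / l = ((c * l - n : ℤ) : ℚ) / l := by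
          congr 1; push_cast; ring
        rw [e]; exact ih
  intro m hm
  obtain ⟨α, hα⟩ := hex m
  obtain ⟨n, hn⟩ := exists_nat_ge (c * l - α * l)
  refine key n ⟨hanti ?_ hα, hm⟩
  rw [div_le_iff₀ hl']; push_cast; linarith

/-- **Proposition 3.10.** `M = V^1 + T(M)` and `V^1 ∩ T(M) = T(V^0)`. -/
theorem stmt9 {k : Type*} [Field k] [CharZero k]
    {M : Type*} [AddCommGroup M] [Module k M]
    (T D : Module.End k M) (C : Set (Module.End k M))
    (hweyl : D * T - T * D = 1)
    (hC : ∀ c ∈ C, Commute c T ∧ Commute c D)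
    (V : ℚ → Submodule k M) (hV : IsVFiltration T D C V) :
    V 1 ⊔ LinearMap.range T = ⊤ ∧ V 1 ⊓ LinearMap.range T = (V 0).map T := by
  constructor
  · rw [eq_top_iff]
    refine VFilt.descend V hV.antitone hV.exhaustive hV.discrete 1 _ _ ?_ ?_
    · rw [inf_top_eq, Int.cast_one]; exact le_sup_left
    · intro α hα h u hu
      rw [inf_top_eq] at h hu
      obtain ⟨N, -, hN⟩ := hV.nilpotent α
      have h1 := h (hN u hu)
      have e : -(D * T) + (α : k) • (1 : Module.End k M)
          = -(T * D) + ((α - 1 : ℚ) : k) • (1 : Module.End k M) := by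
        rw [sub_eq_iff_eq_add.mp hweyl]; push_cast; rw [sub_smul, one_smul]; abel
      obtain ⟨q, hq, hqe⟩ := VFilt.pow_expand
        (Subalgebra.centralizer k {-(T * D)}) (-(T * D))
        (by rw [Subalgebra.mem_centralizer_iff]; rintro g rfl; rfl) ((α - 1 : ℚ) : k) N
      rw [Subalgebra.mem_centralizer_iff] at hq
      rw [e, hqe, ← hq _ rfl] at h1
      have h2 : (-(T * D) * q) u ∈ V 1 ⊔ LinearMap.range T := by
        refine Submodule.mem_sup_right ⟨-(D (q u)), by simp⟩
      rw [LinearMap.add_apply, Submodule.add_mem_iff_left _ h2, LinearMap.smul_apply,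
        Submodule.smul_mem_iff] at h1
      · exact h1
      · apply pow_ne_zero
        rw [Int.cast_one] at hα
        exact_mod_cast (sub_neg.mpr hα).ne
  · apply le_antisymm
    · rintro _ ⟨hv, m, rfl⟩
      refine ⟨m, ?_, rfl⟩
      refine VFilt.descend V hV.antitone hV.exhaustive hV.discrete 0
        ((V 1).comap T) (V 0) (by simp) ?_ hv
      rintro α hα h u ⟨hu, hTu⟩
      rw [Int.cast_zero] at hα
      have hS : -(D * T) ∈ VFilt.A0 T D C := Algebra.subset_adjoin (by simp)
      obtain ⟨N, -, hN⟩ := hV.nilpotent α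
      obtain ⟨q, hq, hqe⟩ := VFilt.pow_expand _ _ hS (α : k) N
      have h1 := hN u hu
      have hDT : (-(D * T)) u ∈ V 0 := by
        have := hV.mapD_le 1 ⟨_, hTu, rfl⟩
        rw [sub_self] at this
        simpa using this
      have h2 : (q * -(D * T)) u ∈ VFilt.gt V α :=
        (le_iSup₂_of_le (f := fun β (_ : β > α) => V β) 0 hα le_rfl)
          (hV.stable q hq 0 ⟨_, hDT, rfl⟩)
      rw [hqe, LinearMap.add_apply, Submodule.add_mem_iff_left _ h2, LinearMap.smul_apply,
        Submodule.smul_mem_iff _ (pow_ne_zero _ (by exact_mod_cast hα.ne))] at h1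
      exact h ⟨h1, hTu⟩
    · refine le_inf ?_ (LinearMap.map_le_range)
      simpa using hV.mapT_le 0
end

section
/- Let (V^α)_{α∈ℚ} be a V-filtration on M and assume that T is injective on M (M has no t-torsion). Then for every u ∈ M and every α ∈ ℚ, one has u ∈ V^α if and only if T(u) ∈ V^{α+1}. If, in addition, T is bijective on M, then V^{α+1} = T(V^α) for every α ∈ ℚ. -/
open Module

theorem VFilt.gt_le_of_discrete {k : Type*} [Field k]
    {M : Type*} [AddCommGroup M] [Module k M]
    (V : ℚ → Submodule k M) (hanti : Antitone V) (ℓ : ℕ)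
    (hd : ∀ (i : ℤ) (α β : ℚ),
      α ∈ Set.Ioc ((i : ℚ) / ℓ) ((i + 1 : ℚ) / ℓ) →
      β ∈ Set.Ioc ((i : ℚ) / ℓ) ((i + 1 : ℚ) / ℓ) → V α = V β) (i : ℤ) :
    VFilt.gt V ((i : ℚ) / ℓ) ≤ V ((i + 1 : ℚ) / ℓ) := by
  unfold VFilt.gt
  refine iSup₂_le fun β hβ => ?_
  rcases le_total ((i + 1 : ℚ) / ℓ) β with h | h
  · exact hanti h
  · exact (hd i β _ ⟨hβ, h⟩ ⟨lt_of_lt_of_le hβ h, le_rfl⟩).le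

/-- **Corollary 3.11.** If `T` is injective on `M`, then `u ∈ V^α ↔ T u ∈ V^{α+1}`;
if moreover `T` is bijective, then `V^{α+1} = T(V^α)` for every `α`. -/
theorem stmt10 {k : Type*} [Field k] [CharZero k]
    {M : Type*} [AddCommGroup M] [Module k M]
    (T D : Module.End k M) (C : Set (Module.End k M))
    (hweyl : D * T - T * D = 1)
    (hC : ∀ c ∈ C, Commute c T ∧ Commute c D)
    (V : ℚ → Submodule k M) (hV : IsVFiltration T D C V)
    (hinj : Function.Injective (⇑T)) :
    (∀ (u : M) (α : ℚ), u ∈ V α ↔ T u ∈ V (α + 1)) ∧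
    (Function.Bijective (⇑T) → ∀ α : ℚ, V (α + 1) = (V α).map T) := by
  have key : ∀ (u : M) (α : ℚ), T u ∈ V (α + 1) → u ∈ V α := by
    intro u α hu
    rcases lt_or_ge 0 α with hα | hα
    · rw [← hV.mapT_eq α hα] at hu
      obtain ⟨w, hw, hwu⟩ := hu
      exact hinj hwu ▸ hw
    obtain ⟨ℓ, hℓ, hd⟩ := hV.discrete
    have hℓ' : (0 : ℚ) < ℓ := by exact_mod_cast hℓ
    have hDT : (D * T) u ∈ V α := by
      have h := hV.mapD_le (α + 1) (Submodule.mem_map_of_mem hu)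
      rw [add_sub_cancel_right] at h
      exact h
    have hSA : -(D * T) ∈ VFilt.A0 T D C :=
      Algebra.subset_adjoin (Or.inl (Or.inr rfl))
    have step : ∀ i : ℤ, (i : ℚ) / ℓ < α → u ∈ V ((i : ℚ) / ℓ) →
        u ∈ V ((i + 1 : ℚ) / ℓ) := by
      intro i hi hui
      apply VFilt.gt_le_of_discrete V hV.antitone ℓ hd i
      set β : ℚ := (i : ℚ) / ℓ with hβ
      set W := VFilt.gt V β with hW
      have hle : ∀ γ, β < γ → V γ ≤ W := fun γ hγ => le_iSup₂_of_le γ hγ le_rfl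
      have hWS : ∀ w ∈ W, (-(D * T)) w ∈ W := by
        have : W ≤ W.comap (-(D * T)) := by
          refine iSup₂_le fun γ hγ x hx => ?_
          exact hle γ hγ (hV.stable _ hSA γ (Submodule.mem_map_of_mem hx))
        exact this
      have hSu : (-(D * T)) u ∈ W := by
        rw [LinearMap.neg_apply]
        exact W.neg_mem (hle α hi hDT)
      have hpow : ∀ n : ℕ, ((-(D * T) + (β : k) • (1 : Module.End k M)) ^ n) u
          - (β : k) ^ n • u ∈ W := by
        intro n
        induction n with
        | zero => simp
        | succ n ih =>
          have e : ((-(D * T) + (β : k) • (1 : Module.End k M)) ^ (n + 1)) u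
              - (β : k) ^ (n + 1) • u
              = (-(D * T)) (((-(D * T) + (β : k) • (1 : Module.End k M)) ^ n) u
                  - (β : k) ^ n • u)
                + (β : k) • (((-(D * T) + (β : k) • (1 : Module.End k M)) ^ n) u
                  - (β : k) ^ n • u)
                + (β : k) ^ n • (-(D * T)) u := by
            rw [pow_succ', Module.End.mul_apply, LinearMap.add_apply, LinearMap.smul_apply,
              Module.End.one_apply, map_sub, map_smul, smul_sub, smul_smul, ← pow_succ']
            abel
          rw [e]
          exact W.add_mem (W.add_mem (hWS _ ih) (W.smul_mem _ ih)) (W.smul_mem _ hSu)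
      obtain ⟨N, -, hN⟩ := hV.nilpotent β
      have h1 : (β : k) ^ N • u ∈ W := by
        have := W.sub_mem (hN u hui) (hpow N)
        rwa [sub_sub_cancel] at this
      have hβ0 : (β : k) ≠ 0 := by
        have : β ≠ 0 := (lt_of_lt_of_le hi hα).ne
        exact_mod_cast this
      exact (W.smul_mem_iff (pow_ne_zero N hβ0)).1 h1
    obtain ⟨β, hβ⟩ := hV.exhaustive u
    have h0 : u ∈ V ((⌊β * ℓ⌋ : ℤ) / ℓ : ℚ) := by
      refine hV.antitone ?_ hβ
      rw [div_le_iff₀ hℓ']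
      exact Int.floor_le _
    have climb : ∀ n : ℕ, u ∈ V α ∨ u ∈ V (((⌊β * ℓ⌋ + n : ℤ) : ℚ) / ℓ) := by
      intro n
      induction n with
      | zero => right; simpa using h0
      | succ n ih =>
        rcases ih with h | h
        · exact Or.inl h
        rcases lt_or_ge (((⌊β * ℓ⌋ + n : ℤ) : ℚ) / ℓ) α with h2 | h2
        · right
          have := step _ h2 h
          convert this using 3
          push_cast
          ring
        · exact Or.inl (hV.antitone h2 h)
    rcases climb (⌈α * ℓ⌉ - ⌊β * ℓ⌋).toNat with h | h
    · exact h
    · refine hV.antitone ?_ h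
      rw [le_div_iff₀ hℓ']
      refine (Int.le_ceil _).trans ?_
      have := Int.self_le_toNat (⌈α * ℓ⌉ - ⌊β * ℓ⌋)
      exact_mod_cast (by omega : ⌈α * ℓ⌉ ≤ ⌊β * ℓ⌋ + ((⌈α * ℓ⌉ - ⌊β * ℓ⌋).toNat : ℤ))
  refine ⟨fun u α => ⟨fun h => hV.mapT_le α (Submodule.mem_map_of_mem h), key u α⟩, ?_⟩
  intro hb α
  refine le_antisymm (fun v hv => ?_) (hV.mapT_le α)
  obtain ⟨u, rfl⟩ := hb.2 v
  exact Submodule.mem_map_of_mem (key u α hv)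
end

section
/- Let (V^α)_{α∈ℚ} be a V-filtration on M and set M' := ∑_{m≥0} D^m(V^{>0}) ⊆ M (the k-subspace spanned by all elements D^m(u) with m ≥ 0 and u ∈ V^{>0}). Then: (a) for every u ∈ M there is an integer m ≥ 0 with T^m(u) ∈ M' (that is, every element of M/M' is annihilated by a power of T); and (b) V^{>0} + (V^0 ∩ M') = V^{>0} + D(V^1) as k-subspaces of M. -/
open Module

section Aux

variable {k : Type*} [Field k] [CharZero k]
variable {M : Type*} [AddCommGroup M] [Module k M]
variable {T D : Module.End k M} {C : Set (Module.End k M)} {V : ℚ → Submodule k M}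

theorem aux_le_gt {a b : ℚ} (h : a < b) : V b ≤ VFilt.gt V a :=
  le_iSup₂_of_le b h le_rfl

theorem aux_gt_le (hA : Antitone V) {l : ℕ} (hl : 0 < l)
    (hd : ∀ (i : ℤ) (α β : ℚ),
      α ∈ Set.Ioc ((i : ℚ) / l) ((i + 1 : ℚ) / l) →
      β ∈ Set.Ioc ((i : ℚ) / l) ((i + 1 : ℚ) / l) → V α = V β) (i : ℤ) :
    VFilt.gt V ((i : ℚ) / l) = V ((i + 1 : ℚ) / l) := by
  have hl' : (0 : ℚ) < l := by exact_mod_cast hl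
  have hlt : (i : ℚ) / l < (i + 1 : ℚ) / l := by
    apply div_lt_div_of_pos_right _ hl'
    linarith
  apply le_antisymm
  · refine iSup₂_le fun b hb => ?_
    rcases le_total b ((i + 1 : ℚ) / l) with h | h
    · exact (hd i b _ ⟨hb, h⟩ ⟨hlt, le_rfl⟩).le
    · exact hA h
  · exact aux_le_gt hlt

theorem aux_key (hweyl : D * T - T * D = 1) (hV : IsWeakVFiltration T D C V)
    {b g : ℚ} (hbg : b < g) (hb : b ≠ 1) {v : M} (hv : v ∈ V b) (hDv : D v ∈ V (g - 1)) :
    v ∈ VFilt.gt V b := by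
  obtain ⟨N, -, hN⟩ := hV.nilpotent b
  have hTD : T (D v) ∈ V g := by
    have := hV.mapT_le (g - 1) (Submodule.mem_map_of_mem hDv)
    simpa using this
  have hstep : ∀ x ∈ V g, (-(D * T) + (b : k) • (1 : Module.End k M)) x ∈ V g := by
    intro x hx
    have h1 : (-(D * T)) x ∈ V g := by
      apply hV.stable (-(D * T)) _ g (Submodule.mem_map_of_mem hx)
      exact Algebra.subset_adjoin (by simp)
    exact add_mem h1 (Submodule.smul_mem _ _ hx)
  have hw : D (T v) = v + T (D v) := by
    have := congrArg (fun f : Module.End k M => f v) hweyl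
    simp at this
    exact sub_eq_iff_eq_add.mp this
  have hpow : ∀ n : ℕ, ((-(D * T) + (b : k) • (1 : Module.End k M)) ^ n) v
      - ((b : k) - 1) ^ n • v ∈ V g := by
    intro n
    induction n with
    | zero => simp
    | succ n ih =>
      have h1 := hstep _ ih
      have h2 : (-(D * T) + (b : k) • (1 : Module.End k M)) v = ((b : k) - 1) • v - T (D v) := by
        simp [hw, sub_smul]
        abel
      rw [map_sub, map_smul, h2] at h1
      rw [pow_succ', Module.End.mul_apply]
      have h3 := sub_mem h1 (Submodule.smul_mem (V g) (((b : k) - 1) ^ n) hTD)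
      convert h3 using 1
      rw [smul_sub, smul_smul, pow_succ]
      abel
  have h4 := sub_mem (hN v hv) (aux_le_gt hbg (hpow N))
  rw [sub_sub_cancel] at h4
  have hne : ((b : k) - 1) ^ N ≠ 0 := by
    apply pow_ne_zero
    rw [sub_ne_zero]
    exact_mod_cast hb
  exact (Submodule.smul_mem_iff _ hne).mp h4

theorem aux_lift (hweyl : D * T - T * D = 1) (hV : IsWeakVFiltration T D C V)
    {g : ℚ} (hg : g ≤ 1) {v : M} (hDv : D v ∈ V (g - 1)) : v ∈ V g := by
  obtain ⟨l, hl, hd⟩ := hV.discrete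
  have hl' : (0 : ℚ) < l := by exact_mod_cast hl
  obtain ⟨a, ha⟩ := hV.exhaustive v
  set i0 : ℤ := ⌊a * l⌋ with hi0
  have key : ∀ n : ℕ, v ∈ V (min g (((i0 + n : ℤ) : ℚ) / l)) := by
    intro n
    induction n with
    | zero =>
      refine hV.antitone ?_ ha
      refine (min_le_right _ _).trans ?_
      rw [div_le_iff₀ hl']
      simpa using Int.floor_le (a * l)
    | succ n ih =>
      rcases le_or_gt g (((i0 + n : ℤ) : ℚ) / l) with h | h
      · rw [min_eq_left h] at ih
        exact hV.antitone (min_le_left _ _) ih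
      · rw [min_eq_right h.le] at ih
        have h5 := aux_key hweyl hV h (by linarith) ih hDv
        rw [aux_gt_le hV.antitone hl hd] at h5
        refine hV.antitone ((min_le_right _ _).trans (le_of_eq ?_)) h5
        push_cast
        ring
  obtain ⟨n, hn⟩ := exists_nat_ge (g * l - i0)
  have := key n
  rwa [min_eq_left] at this
  rw [le_div_iff₀ hl']
  push_cast
  linarith

theorem aux_lift_pow (hweyl : D * T - T * D = 1) (hV : IsWeakVFiltration T D C V)
    {g : ℚ} (hg : g ≤ 1) {v : M} (j : ℕ) (hDv : (D ^ j) v ∈ V (g - j)) : v ∈ V g := by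
  induction j with
  | zero => simpa using hDv
  | succ j ih =>
    apply ih
    apply aux_lift hweyl hV
    · have : (0 : ℚ) ≤ j := Nat.cast_nonneg j
      linarith
    · rw [pow_succ', Module.End.mul_apply] at hDv
      convert hDv using 2
      push_cast
      ring

theorem aux_pow_mem (hV : IsWeakVFiltration T D C V)
    {g : ℚ} {v : M} (hv : v ∈ V g) (j : ℕ) : (D ^ j) v ∈ V (g - j) := by
  induction j with
  | zero => simpa using hv
  | succ j ih =>
    have := hV.mapD_le _ (Submodule.mem_map_of_mem ih)
    rw [pow_succ', Module.End.mul_apply]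
    convert this using 2
    push_cast
    ring

theorem aux_powT_mem (hV : IsWeakVFiltration T D C V)
    {g : ℚ} {v : M} (hv : v ∈ V g) (j : ℕ) : (T ^ j) v ∈ V (g + j) := by
  induction j with
  | zero => simpa using hv
  | succ j ih =>
    have := hV.mapT_le _ (Submodule.mem_map_of_mem ih)
    rw [pow_succ', Module.End.mul_apply]
    convert this using 2
    push_cast
    ring

/-- Partial sums of `M'`. -/
def auxN (D : Module.End k M) (W : Submodule k M) : ℕ → Submodule k M
  | 0 => W
  | n + 1 => auxN D W n ⊔ W.map (D ^ (n + 1))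

theorem auxN_mono (D : Module.End k M) (W : Submodule k M) : Monotone (auxN D W) :=
  monotone_nat_of_le_succ fun _ => le_sup_left

theorem auxN_ge (D : Module.End k M) (W : Submodule k M) (n : ℕ) :
    W.map (D ^ n) ≤ auxN D W n := by
  cases n with
  | zero =>
    rintro _ ⟨x, hx, rfl⟩
    simpa [auxN] using hx
  | succ n => exact le_sup_right

theorem auxN_le (hV : IsWeakVFiltration T D C V) (e : ℚ) (n : ℕ) :
    auxN D (V e) n ≤ V (e - n) := by
  induction n with
  | zero => simp [auxN]
  | succ n ih =>
    refine sup_le (ih.trans (hV.antitone ?_)) ?_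
    · push_cast
      linarith
    · rintro _ ⟨x, hx, rfl⟩
      exact aux_pow_mem hV hx (n + 1)

theorem auxN_inf (hweyl : D * T - T * D = 1) (hV : IsWeakVFiltration T D C V)
    {e : ℚ} (he : e ≤ 1) (n : ℕ) (u : M) (hu : u ∈ V 0) (hn : u ∈ auxN D (V e) n) :
    u ∈ V e ⊔ (V 1).map D := by
  induction n with
  | zero => exact Submodule.mem_sup_left hn
  | succ n ih =>
    obtain ⟨a, ha, _, ⟨b, hb, rfl⟩, rfl⟩ := Submodule.mem_sup.mp hn
    rcases Nat.eq_zero_or_pos n with rfl | hpos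
    · rcases le_total e 0 with h0 | h0
      · exact Submodule.mem_sup_left (hV.antitone h0 hu)
      have ha' : a ∈ V e := ha
      have h1 : (D ^ (0 + 1)) b ∈ V (1 - 1) := by
        have := sub_mem hu (hV.antitone h0 ha')
        simpa using this
      rw [zero_add, pow_one] at h1 ⊢
      exact Submodule.add_mem_sup ha' (Submodule.mem_map_of_mem (aux_lift hweyl hV le_rfl h1))
    · apply ih
      refine add_mem ha ?_
      have hn1 : (1 : ℚ) ≤ n := by exact_mod_cast hpos
      have h1 : (D ^ (n + 1)) b ∈ V (e - n) := by
        have := sub_mem (hV.antitone (show e - n ≤ 0 by linarith) hu) (auxN_le hV e n ha)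
        simpa using this
      rw [pow_succ, Module.End.mul_apply] at h1 ⊢
      exact auxN_ge D _ n (Submodule.mem_map_of_mem (aux_lift_pow hweyl hV he n h1))

end Aux

/-- **Proposition 3.12 (computational content).** With `M' = ∑_{m ≥ 0} D^m(V^{>0})`:
(a) every element of `M/M'` is annihilated by a power of `T`;
(b) `V^{>0} + (V^0 ∩ M') = V^{>0} + D(V^1)`. -/
theorem stmt11 {k : Type*} [Field k] [CharZero k]
    {M : Type*} [AddCommGroup M] [Module k M]
    (T D : Module.End k M) (C : Set (Module.End k M))
    (hweyl : D * T - T * D = 1)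
    (hC : ∀ c ∈ C, Commute c T ∧ Commute c D)
    (V : ℚ → Submodule k M) (hV : IsVFiltration T D C V)
    (M' : Submodule k M) (hM' : M' = ⨆ m : ℕ, (VFilt.gt V 0).map (D ^ m)) :
    (∀ u : M, ∃ m : ℕ, (T ^ m) u ∈ M') ∧
    (VFilt.gt V 0 ⊔ (V 0 ⊓ M') = VFilt.gt V 0 ⊔ (V 1).map D) := by
  have hW := hV.toIsWeakVFiltration
  obtain ⟨l, hl, hd⟩ := hW.discrete
  have hl' : (1 : ℚ) ≤ l := by exact_mod_cast hl
  have hgt : VFilt.gt V 0 = V (1 / l) := by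
    simpa using aux_gt_le hW.antitone hl hd 0
  have he : (1 : ℚ) / l ≤ 1 := by
    rw [div_le_one (by linarith)]
    exact hl'
  have hM0 : ∀ m : ℕ, (VFilt.gt V 0).map (D ^ m) ≤ M' := by
    intro m
    rw [hM']
    exact le_iSup (fun m : ℕ => (VFilt.gt V 0).map (D ^ m)) m
  constructor
  · intro u
    obtain ⟨a, ha⟩ := hW.exhaustive u
    obtain ⟨m, hm⟩ := exists_nat_gt (-a)
    refine ⟨m, hM0 0 ⟨(T ^ m) u, ?_, by simp⟩⟩
    exact aux_le_gt (show (0 : ℚ) < a + m by linarith) (aux_powT_mem hW ha m)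
  · apply le_antisymm
    · refine sup_le le_sup_left ?_
      rintro u ⟨hu0, huM⟩
      have hle : M' ≤ ⨆ n, auxN D (V (1 / l)) n := by
        rw [hM', hgt]
        exact iSup_mono fun n => auxN_ge D _ n
      obtain ⟨n, hn⟩ := (Submodule.mem_iSup_of_directed _
        (auxN_mono D (V (1 / l))).directed_le).mp (hle huM)
      rw [hgt]
      exact auxN_inf hweyl hW he n u hu0 hn
    · refine sup_le le_sup_left (le_sup_of_le_right (le_inf ?_ ?_))
      · simpa using hW.mapD_le 1
      · refine le_trans ?_ (hM0 1)
        rw [pow_one]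
        exact Submodule.map_mono (aux_le_gt one_pos)
end

section
/- Assume that A0 is a left Noetherian ring. If M admits a pre-V-filtration (W^i)_{i∈ℤ}, then M admits a V-filtration (V^α)_{α∈ℚ}. Moreover, if all the roots of the polynomial p attached to the pre-V-filtration W lie in the interval [0,1), then this V-filtration satisfies V^i = W^i for every integer i. -/
open Module

/-- A pre-`V`-filtration on `M` (indexed by `ℤ`), with associated polynomial `p`. -/
structure IsPreVFiltration {k : Type*} [Field k] [CharZero k]
    {M : Type*} [AddCommGroup M] [Module k M]
    (T D : Module.End k M) (C : Set (Module.End k M))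
    (W : ℤ → Submodule k M) (p : Polynomial k) : Prop where
  antitone : Antitone W
  exhaustive : ∀ m : M, ∃ i : ℤ, m ∈ W i
  stable : ∀ a ∈ VFilt.A0 T D C, ∀ i : ℤ, (W i).map a ≤ W i
  mapT_le : ∀ i : ℤ, (W i).map T ≤ W (i + 1)
  mapD_le : ∀ i : ℤ, (W i).map D ≤ W (i - 1)
  fg : ∀ i : ℤ, ∃ F : Finset M, (↑F : Set M) ⊆ (W i : Set M) ∧
    ∀ U : Submodule k M, (∀ a ∈ VFilt.A0 T D C, U.map a ≤ U) →
      (↑F : Set M) ⊆ (U : Set M) → W i ≤ U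
  eventually : ∃ i₀ : ℤ, ∀ i : ℤ, i₀ ≤ i → W (i + 1) = (W i).map T
  p_ne : p ≠ 0
  p_factors : ∃ (c : k) (L : Multiset ℚ),
    p = Polynomial.C c * (L.map fun q : ℚ => Polynomial.X - Polynomial.C (q : k)).prod
  p_spec : ∀ i : ℤ, (W i).map
      (Polynomial.aeval (D * T - (i : k) • (1 : Module.End k M)) p) ≤ W (i + 1)

namespace VAux

open Polynomial

section poly

variable {k : Type*} [Field k] [CharZero k]

/-- Nonzero split polynomial with all roots in (the image of) `A`. -/
def Good (A : Set ℚ) (b : k[X]) : Prop :=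
  b ≠ 0 ∧ b.Splits ∧ ∀ x, b.IsRoot x → ∃ q ∈ A, (q : k) = x

lemma Good.mono {A B : Set ℚ} {b : k[X]} (h : Good A b) (hAB : A ⊆ B) : Good B b := by
  refine ⟨h.1, h.2.1, fun x hx => ?_⟩
  obtain ⟨q, hq, rfl⟩ := h.2.2 x hx
  exact ⟨q, hAB hq, rfl⟩

lemma Good.one (A : Set ℚ) : Good A (1 : k[X]) :=
  ⟨one_ne_zero, Splits.one, fun x hx => by simp [IsRoot] at hx⟩

lemma Good.mul {A : Set ℚ} {b c : k[X]} (hb : Good A b) (hc : Good A c) : Good A (b * c) := by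
  refine ⟨mul_ne_zero hb.1 hc.1, hb.2.1.mul hc.2.1, fun x hx => ?_⟩
  rcases root_mul.1 hx with h | h
  · exact hb.2.2 x h
  · exact hc.2.2 x h

lemma Good.shift {A : Set ℚ} {b : k[X]} (hb : Good A b) (c : ℚ) :
    Good {r | ∃ q ∈ A, r = q + c} (b.comp (X - C (c : k))) := by
  refine ⟨?_, hb.2.1.comp_X_sub_C _, fun x hx => ?_⟩
  · intro h
    apply hb.1
    have := congrArg (fun f => f.comp (X + C (c : k))) h
    simpa [comp_assoc] using this
  · have : b.IsRoot (x - c) := by simpa [IsRoot, eval_comp] using hx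
    obtain ⟨q, hq, h⟩ := hb.2.2 _ this
    exact ⟨q + c, ⟨q, hq, rfl⟩, by push_cast; rw [h]; ring⟩

lemma Good.of_dvd {A : Set ℚ} {b c : k[X]} (hb : Good A b) (hc : c ∣ b) : Good A c :=
  ⟨fun h => hb.1 (by simpa [h] using hc), hb.2.1.of_dvd hb.1 hc, fun x hx => hb.2.2 x (hx.dvd hc)⟩

lemma Good.inter {A B : Set ℚ} {b : k[X]} (h : Good A b) (h' : Good B b) : Good (A ∩ B) b := by
  refine ⟨h.1, h.2.1, fun x hx => ?_⟩
  obtain ⟨q, hq, e⟩ := h.2.2 x hx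
  obtain ⟨q', hq', e'⟩ := h'.2.2 x hx
  have : q = q' := by exact_mod_cast e.trans e'.symm
  subst this
  exact ⟨q, ⟨hq, hq'⟩, e⟩

variable {M : Type*} [AddCommGroup M] [Module k M]

lemma stab {θ : Module.End k M} {N : Submodule k M} (h : ∀ u ∈ N, θ u ∈ N) (f : k[X]) :
    ∀ u ∈ N, aeval θ f u ∈ N := by
  induction f using Polynomial.induction_on' with
  | add p q hp hq => intro u hu; simpa using N.add_mem (hp u hu) (hq u hu)
  | monomial n a =>
    intro u hu
    have : ∀ n : ℕ, (θ ^ n) u ∈ N := by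
      intro n
      induction n with
      | zero => simpa using hu
      | succ n ih => rw [pow_succ']; exact h _ ih
    rw [aeval_monomial, ← Algebra.smul_def]
    exact N.smul_mem _ (this n)

lemma gcd_mem {θ : Module.End k M} {N : Submodule k M} (h : ∀ u ∈ N, θ u ∈ N)
    {A B : Set ℚ} {f g : k[X]} (hf : Good A f) (hg : Good B g) {u : M}
    (hfu : aeval θ f u ∈ N) (hgu : aeval θ g u ∈ N) :
    ∃ d : k[X], Good (A ∩ B) d ∧ d ∣ g ∧ aeval θ d u ∈ N := by
  classical
  refine ⟨EuclideanDomain.gcd f g, (hf.of_dvd (EuclideanDomain.gcd_dvd_left _ _)).inter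
    (hg.of_dvd (EuclideanDomain.gcd_dvd_right _ _)), EuclideanDomain.gcd_dvd_right _ _, ?_⟩
  rw [EuclideanDomain.gcd_eq_gcd_ab, mul_comm f, mul_comm g]
  simp only [map_add, map_mul, LinearMap.add_apply, Module.End.mul_apply]
  exact N.add_mem (stab h _ _ hfu) (stab h _ _ hgu)

lemma coprime_mem {θ : Module.End k M} {N : Submodule k M} (h : ∀ u ∈ N, θ u ∈ N)
    {A B : Set ℚ} {f g : k[X]} (hf : Good A f) (hg : Good B g) {u : M}
    (hfu : aeval θ f u ∈ N) (hgu : aeval θ g u ∈ N) (hAB : ∀ q ∈ A, q ∉ B) : u ∈ N := by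
  obtain ⟨d, hd, -, hdu⟩ := gcd_mem h hf hg hfu hgu
  have hdeg : d.degree = 0 := by
    by_contra hne
    obtain ⟨x, hx⟩ := hd.2.1.exists_eval_eq_zero hne
    obtain ⟨q, hq, -⟩ := hd.2.2 x hx
    exact hAB q hq.1 hq.2
  have hc := eq_C_of_degree_eq_zero hdeg
  have hc0 : d.coeff 0 ≠ 0 := fun h0 => hd.1 (by rw [hc, h0, C_0])
  rw [hc, aeval_C, Module.algebraMap_end_apply] at hdu
  exact (N.smul_mem_iff hc0).1 hdu

lemma semi {a x y : Module.End k M} (h : a * x = y * a) (f : k[X]) :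
    a * aeval x f = aeval y f * a := by
  have hp : ∀ n : ℕ, a * x ^ n = y ^ n * a := fun n => ((show SemiconjBy a x y from h).pow_right n)
  induction f using Polynomial.induction_on' with
  | add p q hp hq => simp [mul_add, add_mul, hp, hq]
  | monomial n c =>
    rw [aeval_monomial, aeval_monomial, ← Algebra.smul_def, ← Algebra.smul_def,
      mul_smul_comm, hp, smul_mul_assoc]

/-- The filtration. -/
def VF (θ : Module.End k M) (W : ℤ → Submodule k M) (hθ : ∀ j, ∀ u ∈ W j, θ u ∈ W j) (α : ℚ) :
    Submodule k M where
  carrier := {u | ∀ j, ∃ b : k[X], Good (Set.Ici α) b ∧ aeval θ b u ∈ W j}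
  zero_mem' := fun j => ⟨1, Good.one _, by simp⟩
  add_mem' := by
    intro u v hu hv j
    obtain ⟨b, hb, hbu⟩ := hu j
    obtain ⟨c, hc, hcv⟩ := hv j
    refine ⟨b * c, hb.mul hc, ?_⟩
    rw [map_add]
    refine (W j).add_mem ?_ ?_
    · rw [mul_comm, map_mul]; exact stab (hθ j) _ _ hbu
    · rw [map_mul]; exact stab (hθ j) _ _ hcv
  smul_mem' := by
    intro c u hu j
    obtain ⟨b, hb, hbu⟩ := hu j
    exact ⟨b, hb, by rw [map_smul]; exact (W j).smul_mem _ hbu⟩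

section VFsec

variable {θ : Module.End k M} {W : ℤ → Submodule k M} {hθ : ∀ j, ∀ u ∈ W j, θ u ∈ W j}

lemma mem_VF {α : ℚ} {u : M} : u ∈ VF θ W hθ α ↔
    ∀ j, ∃ b : k[X], Good (Set.Ici α) b ∧ aeval θ b u ∈ W j := Iff.rfl

lemma VF_anti : Antitone (VF θ W hθ) := by
  intro α β h u hu j
  obtain ⟨b, hb, hbu⟩ := hu j
  exact ⟨b, hb.mono (Set.Ici_subset_Ici.2 h), hbu⟩

lemma VF_stab {α : ℚ} {a : Module.End k M} (ha : Commute a θ)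
    (haW : ∀ j, ∀ u ∈ W j, a u ∈ W j) : ∀ u ∈ VF θ W hθ α, a u ∈ VF θ W hθ α := by
  intro u hu j
  obtain ⟨b, hb, hbu⟩ := hu j
  refine ⟨b, hb, ?_⟩
  have := semi ha.eq b
  rw [← Module.End.mul_apply, ← this]
  exact haW j _ hbu

lemma VF_sat {α : ℚ} {u : M} {b : k[X]} (hb : Good (Set.Ici α) b)
    (h : aeval θ b u ∈ VF θ W hθ α) : u ∈ VF θ W hθ α := by
  intro j
  obtain ⟨c, hc, hcu⟩ := h j
  exact ⟨c * b, hc.mul hb, by rw [map_mul]; exact hcu⟩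

lemma VF_shift {α c : ℚ} (n : ℤ) {a : Module.End k M}
    (ha : a * θ = (θ - (c : k) • (1 : Module.End k M)) * a)
    (haW : ∀ j, ∀ u ∈ W j, a u ∈ W (j + n)) : ∀ u ∈ VF θ W hθ α, a u ∈ VF θ W hθ (α + c) := by
  intro u hu j
  obtain ⟨b, hb, hbu⟩ := hu (j - n)
  refine ⟨b.comp (X - C (c : k)), (hb.shift c).mono ?_, ?_⟩
  · rintro _ ⟨q, hq, rfl⟩
    simp only [Set.mem_Ici] at *
    linarith
  · have := semi ha b
    rw [aeval_comp]
    have e : aeval θ (X - C (c : k)) = θ - (c : k) • (1 : Module.End k M) := by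
      rw [map_sub, aeval_X, aeval_C, Algebra.algebraMap_eq_smul_one]
    rw [e, ← Module.End.mul_apply, ← this]
    simpa using haW _ _ hbu

/-- Iterating `p`. -/
lemma exists_P {p : k[X]} {B : Set ℚ} (hp : Good B p)
    (hspec : ∀ i : ℤ, ∀ u ∈ W i, aeval (θ - (i : k) • (1 : Module.End k M)) p u ∈ W (i + 1))
    (m : ℤ) (n : ℕ) :
    ∃ P : k[X], Good {r | ∃ q ∈ B, ∃ i : ℤ, m ≤ i ∧ i < m + n ∧ r = q + i} P ∧
      ∀ u ∈ W m, aeval θ P u ∈ W (m + n) := by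
  induction n with
  | zero => exact ⟨1, Good.one _, by simp⟩
  | succ n ih =>
    obtain ⟨P, hP, hPW⟩ := ih
    refine ⟨p.comp (X - C (((m + n : ℤ) : ℚ) : k)) * P, Good.mul ((hp.shift _).mono ?_)
      (hP.mono ?_), ?_⟩
    · rintro _ ⟨q, hq, rfl⟩
      exact ⟨q, hq, m + n, by omega, by push_cast; omega, rfl⟩
    · rintro _ ⟨q, hq, i, h1, h2, rfl⟩
      exact ⟨q, hq, i, h1, by push_cast; omega, rfl⟩
    · intro u hu
      have := hspec _ _ (hPW u hu)
      rw [map_mul, aeval_comp]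
      have e : aeval θ (X - C (((m + n : ℤ) : ℚ) : k)) =
          θ - ((m + n : ℤ) : k) • (1 : Module.End k M) := by
        rw [map_sub, aeval_X, aeval_C, Algebra.algebraMap_eq_smul_one]
        push_cast; rfl
      rw [e]
      push_cast at this ⊢
      rw [← add_assoc]
      exact this

variable {p : k[X]} {B : Set ℚ}

lemma W_le_VF (hanti : Antitone W) (hp : Good B p)
    (hspec : ∀ i : ℤ, ∀ u ∈ W i, aeval (θ - (i : k) • (1 : Module.End k M)) p u ∈ W (i + 1))
    {lo : ℚ} (hlo : ∀ q ∈ B, lo ≤ q) (m : ℤ) : W m ≤ VF θ W hθ (m + lo) := by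
  intro u hu j
  obtain ⟨P, hP, hPW⟩ := exists_P hp hspec m (j - m).toNat
  refine ⟨P, hP.mono ?_, hanti (by omega) (hPW u hu)⟩
  rintro _ ⟨q, hq, i, h1, -, rfl⟩
  have := hlo q hq
  have h1 : (m : ℚ) ≤ i := by exact_mod_cast h1
  simp only [Set.mem_Ici]; linarith

lemma VF_le_W (hanti : Antitone W) (hex : ∀ u, ∃ i, u ∈ W i) (hp : Good B p)
    (hspec : ∀ i : ℤ, ∀ u ∈ W i, aeval (θ - (i : k) • (1 : Module.End k M)) p u ∈ W (i + 1))
    {hi : ℚ} (hhi : ∀ q ∈ B, q < hi) (m : ℤ) {α : ℚ} (hα : m - 1 + hi ≤ α) :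
    VF θ W hθ α ≤ W m := by
  intro u hu
  obtain ⟨i, hi'⟩ := hex u
  by_cases him : m ≤ i
  · exact hanti him hi'
  obtain ⟨P, hP, hPW⟩ := exists_P hp hspec i (m - i).toNat
  have e : i + ((m - i).toNat : ℤ) = m := by omega
  rw [e] at hP hPW
  obtain ⟨b, hb, hbu⟩ := hu m
  refine coprime_mem (hθ m) hb hP hbu (hPW u hi') ?_
  rintro _ h0 ⟨q, hq, j, h1, h2, rfl⟩
  have h2' : (j : ℚ) ≤ m - 1 := by exact_mod_cast (by omega : j ≤ m - 1)
  have := hhi q hq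
  simp only [Set.mem_Ici] at h0
  linarith

/-- Roots may be taken in a lattice. -/
lemma VF_disc (hanti : Antitone W) (hex : ∀ u, ∃ i, u ∈ W i) (hp : Good B p)
    (hspec : ∀ i : ℤ, ∀ u ∈ W i, aeval (θ - (i : k) • (1 : Module.End k M)) p u ∈ W (i + 1))
    {l : ℕ} (hl : 0 < l) (hB : ∀ q ∈ B, ∃ z : ℤ, q * l = z) {α β : ℚ} (i : ℤ)
    (hα : (i : ℚ) / l < α) (hβ : β ≤ (i + 1 : ℚ) / l) :
    VF θ W hθ α ≤ VF θ W hθ β := by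
  intro u hu j
  obtain ⟨m, hm⟩ := hex u
  obtain ⟨P, hP, hPW⟩ := exists_P hp hspec m (j - m).toNat
  obtain ⟨b, hb, hbu⟩ := hu j
  obtain ⟨d, hd, -, hdu⟩ := gcd_mem (hθ j) hb hP hbu (hanti (by omega) (hPW u hm))
  refine ⟨d, hd.mono ?_, hdu⟩
  rintro _ ⟨h0, q, hq, n, -, -, rfl⟩
  obtain ⟨z, hz⟩ := hB q hq
  have hl' : (0 : ℚ) < l := by exact_mod_cast hl
  simp only [Set.mem_Ici] at *
  have h1 : (i : ℚ) < (q + n) * l := by rw [div_lt_iff₀ hl'] at hα; nlinarith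
  rw [le_div_iff₀ hl'] at hβ
  have h2 : ((i + 1 : ℤ) : ℚ) ≤ ((z + n * l : ℤ) : ℚ) := by
    have : (i : ℚ) < ((z + n * l : ℤ) : ℚ) := by push_cast; rw [← hz]; linarith
    exact_mod_cast Int.add_one_le_iff.2 (by exact_mod_cast this)
  push_cast at h2
  refine le_of_mul_le_mul_right ?_ hl'
  rw [add_mul, hz]; linarith

lemma VF_nil (hanti : Antitone W) (hex : ∀ u, ∃ i, u ∈ W i) (hp : Good B p)
    (hspec : ∀ i : ℤ, ∀ u ∈ W i, aeval (θ - (i : k) • (1 : Module.End k M)) p u ∈ W (i + 1))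
    {lo hi : ℚ} (hlo : ∀ q ∈ B, lo ≤ q) (hhi : ∀ q ∈ B, q < hi)
    {l : ℕ} (hl : 0 < l) (hB : ∀ q ∈ B, ∃ z : ℤ, q * l = z) (α : ℚ) :
    ∃ β > α, ∃ N : ℕ, ∀ u ∈ VF θ W hθ α,
      aeval θ ((X - C (α : k)) ^ N) u ∈ VF θ W hθ β := by
  have hl' : (0 : ℚ) < l := by exact_mod_cast hl
  refine ⟨(⌊α * l⌋ + 1 : ℚ) / l, ?_, ?_⟩
  · rw [gt_iff_lt, lt_div_iff₀ hl']; exact Int.lt_floor_add_one _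
  set β : ℚ := (⌊α * l⌋ + 1 : ℚ) / l with hβ
  obtain ⟨m, hm⟩ : ∃ m : ℤ, (m : ℚ) - 1 + hi ≤ α :=
    ⟨⌊α + 1 - hi⌋, by have := Int.floor_le (α + 1 - hi); linarith⟩
  obtain ⟨m', hm'⟩ : ∃ m' : ℤ, β ≤ m' + lo :=
    ⟨⌈β - lo⌉, by have := Int.le_ceil (β - lo); linarith⟩
  obtain ⟨P, hP, hPW⟩ := exists_P hp hspec m (m' - m).toNat
  have hst : ∀ u ∈ VF θ W hθ β, θ u ∈ VF θ W hθ β := VF_stab (Commute.refl θ) hθ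
  have hWV : W m' ≤ VF θ W hθ β :=
    (W_le_VF hanti hp hspec hlo m').trans (VF_anti hm')
  refine ⟨P.natDegree, fun u hu => ?_⟩
  have hPu : aeval θ P u ∈ VF θ W hθ β :=
    hWV (hanti (by omega) (hPW u (VF_le_W hanti hex hp hspec hhi m hm hu)))
  obtain ⟨b, hb, hbu⟩ := hu m'
  obtain ⟨d, hd, hdP, hdu⟩ := gcd_mem hst hb hP (hWV hbu) hPu
  obtain ⟨h, hdh, hnd⟩ := exists_eq_pow_rootMultiplicity_mul_and_not_dvd d hd.1 (α : k)
  have hr : rootMultiplicity (α : k) d ≤ P.natDegree := by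
    have h1 : ((X - C (α : k)) ^ rootMultiplicity (α : k) d).natDegree ≤ P.natDegree :=
      natDegree_le_of_dvd ((pow_rootMultiplicity_dvd d _).trans hdP) hP.1
    simpa using h1
  have hh : Good (Set.Ici β) h := by
    have h0 := hd.of_dvd (Dvd.intro_left _ hdh.symm)
    refine ⟨h0.1, h0.2.1, fun x hx => ?_⟩
    obtain ⟨_, ⟨hr1, q, hq, n, -, -, rfl⟩, rfl⟩ := h0.2.2 x hx
    refine ⟨q + n, ?_, rfl⟩
    have hne : q + n ≠ α := by
      intro e
      rw [e] at hx
      exact hnd (dvd_iff_isRoot.2 hx)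
    have hlt : α < q + n := lt_of_le_of_ne hr1 hne.symm
    obtain ⟨z, hz⟩ := hB q hq
    have hz' : ((z + n * l : ℤ) : ℚ) = (q + n) * l := by push_cast; rw [← hz]; ring
    have h2 : ⌊α * l⌋ < z + n * l := by
      rw [Int.floor_lt, hz']
      exact mul_lt_mul_of_pos_right hlt hl'
    have h3 : ((⌊α * l⌋ + 1 : ℤ) : ℚ) ≤ ((z + n * l : ℤ) : ℚ) := by
      exact_mod_cast Int.add_one_le_iff.2 h2
    rw [Set.mem_Ici, hβ, div_le_iff₀ hl', ← hz']
    push_cast at h3 ⊢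
    exact h3
  have h4 : aeval θ ((X - C (α : k)) ^ rootMultiplicity (α : k) d) u ∈ VF θ W hθ β := by
    refine VF_sat hh ?_
    rw [← Module.End.mul_apply, ← map_mul, mul_comm, ← hdh]
    exact hdu
  obtain ⟨e, he⟩ := Nat.exists_eq_add_of_le' hr
  rw [he, pow_add, map_mul]
  exact stab hst _ _ h4

end VFsec

end poly

end VAux

/-- **Proposition 4.5(ii)+(iii).** If `A0` is left Noetherian and `M` admits a
pre-`V`-filtration `W` with polynomial `p`, then `M` admits a `V`-filtration; moreover, if
all roots of `p` lie in `[0,1)`, this `V`-filtration satisfies `V^i = W^i` for `i ∈ ℤ`. -/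
theorem stmt12 {k : Type*} [Field k] [CharZero k]
    {M : Type*} [AddCommGroup M] [Module k M]
    (T D : Module.End k M) (C : Set (Module.End k M))
    (hweyl : D * T - T * D = 1)
    (hC : ∀ c ∈ C, Commute c T ∧ Commute c D)
    (hNoeth : IsNoetherianRing ↥(VFilt.A0 T D C))
    (W : ℤ → Submodule k M) (p : Polynomial k)
    (hW : IsPreVFiltration T D C W p) :
    ∃ V : ℚ → Submodule k M, IsVFiltration T D C V ∧
      ((∀ x : k, p.IsRoot x → ∃ q : ℚ, (q : k) = x ∧ 0 ≤ q ∧ q < 1) →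
        ∀ i : ℤ, V (i : ℚ) = W i) := by  classical
  set θ : Module.End k M := D * T with hθdef
  have hTA : T ∈ VFilt.A0 T D C := Algebra.subset_adjoin (by simp)
  have hSA : -θ ∈ VFilt.A0 T D C := Algebra.subset_adjoin (by simp [hθdef])
  have hθA : θ ∈ VFilt.A0 T D C := by simpa using neg_mem hSA
  have hθ : ∀ j, ∀ u ∈ W j, θ u ∈ W j :=
    fun j u hu => hW.stable θ hθA j (Submodule.mem_map_of_mem hu)
  have hDT : T * D = θ - 1 := by rw [← hweyl]; abel
  have hTθ : T * θ = (θ - ((1 : ℚ) : k) • (1 : Module.End k M)) * T := by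
    rw [Rat.cast_one, one_smul, ← hDT, hθdef, mul_assoc]
  have hDθ : D * θ = (θ - ((-1 : ℚ) : k) • (1 : Module.End k M)) * D := by
    have h1 : θ = T * D + 1 := by rw [hDT]; abel
    have h2 : θ * D = D * (T * D) := by rw [hθdef, mul_assoc]
    push_cast
    rw [neg_smul, one_smul, sub_neg_eq_add, add_mul, h2, one_mul, h1, mul_add, mul_one]
  have hspec : ∀ i : ℤ, ∀ u ∈ W i,
      Polynomial.aeval (θ - (i : k) • (1 : Module.End k M)) p u ∈ W (i + 1) :=
    fun i u hu => hW.p_spec i (Submodule.mem_map_of_mem hu)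
  obtain ⟨c, L, hpL⟩ := hW.p_factors
  have hp : VAux.Good {q | q ∈ L} p := by
    refine ⟨hW.p_ne, ?_, fun x hx => ?_⟩
    · rw [hpL]
      refine (Polynomial.Splits.C c).mul (Polynomial.Splits.multisetProd fun f hf => ?_)
      obtain ⟨q, -, rfl⟩ := Multiset.mem_map.1 hf
      exact Polynomial.Splits.X_sub_C _
    · have hc : c ≠ 0 := fun h => hW.p_ne (by rw [hpL, h]; simp)
      rw [hpL, Polynomial.IsRoot, Polynomial.eval_mul, Polynomial.eval_C, mul_eq_zero,
        or_iff_right hc, Polynomial.eval_multiset_prod, Multiset.prod_eq_zero_iff,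
        Multiset.map_map] at hx
      obtain ⟨q, hq, h⟩ := Multiset.mem_map.1 hx
      simp only [Function.comp, Polynomial.eval_sub, Polynomial.eval_X, Polynomial.eval_C] at h
      exact ⟨q, hq, (sub_eq_zero.1 h).symm⟩
  obtain ⟨lo, hlo⟩ : ∃ lo : ℚ, ∀ q ∈ {q | q ∈ L}, lo ≤ q := by
    obtain ⟨lo, h⟩ := L.toFinset.bddBelow
    exact ⟨lo, fun q hq => h (by simpa using hq)⟩
  obtain ⟨hi, hhi⟩ : ∃ hi : ℚ, ∀ q ∈ {q | q ∈ L}, q < hi := by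
    obtain ⟨hi, h⟩ := L.toFinset.bddAbove
    exact ⟨hi + 1, fun q hq => lt_of_le_of_lt (h (by simpa using hq)) (by linarith)⟩
  obtain ⟨l, hl, hB⟩ : ∃ l : ℕ, 0 < l ∧ ∀ q ∈ {q | q ∈ L}, ∃ z : ℤ, q * l = z := by
    refine ⟨∏ q ∈ L.toFinset, q.den, Finset.prod_pos fun q _ => q.den_pos, fun q hq => ?_⟩
    obtain ⟨e, he⟩ := Finset.dvd_prod_of_mem (fun q : ℚ => q.den)
      (show q ∈ L.toFinset by simpa using hq)
    refine ⟨q.num * e, ?_⟩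
    rw [he]
    push_cast
    rw [← mul_assoc, Rat.mul_den_eq_num]
  have hanti := hW.antitone
  have hex := hW.exhaustive
  let V := VAux.VF θ W hθ
  have hVA : ∀ α, ∀ a ∈ VFilt.A0 T D C, ∀ u ∈ V α, a u ∈ V α := by
    intro α a ha
    refine Algebra.adjoin_induction (p := fun a _ => ∀ u ∈ V α, a u ∈ V α) ?_ ?_ ?_ ?_ ha
    · intro x hx
      rcases hx with (rfl | rfl) | hx
      · intro u hu
        exact VAux.VF_anti (by linarith : α ≤ α + 1) (VAux.VF_shift 1 hTθ
          (fun j u hu => hW.mapT_le j (Submodule.mem_map_of_mem hu)) u hu)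
      · intro u hu
        rw [LinearMap.neg_apply]
        exact neg_mem (VAux.VF_stab (Commute.refl θ) hθ u hu)
      · have hx' := hC x hx
        exact VAux.VF_stab (hx'.2.mul_right hx'.1) fun j u hu =>
          hW.stable x (Algebra.subset_adjoin (Or.inr hx)) j (Submodule.mem_map_of_mem hu)
    · intro r u hu
      rw [Module.algebraMap_end_apply]
      exact (V α).smul_mem _ hu
    · intro x y _ _ hx hy u hu
      exact add_mem (hx u hu) (hy u hu)
    · intro x y _ _ hx hy u hu
      exact hx _ (hy u hu)
  have hVθ : ∀ α, ∀ u ∈ V α, θ u ∈ V α := fun α => hVA α θ hθA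
  have hVT : ∀ α, ∀ u ∈ V α, T u ∈ V (α + 1) := fun α => VAux.VF_shift 1 hTθ
    (fun j u hu => hW.mapT_le j (Submodule.mem_map_of_mem hu))
  have hVD : ∀ α, ∀ u ∈ V α, D u ∈ V (α - 1) := by
    intro α u hu
    rw [sub_eq_add_neg]
    exact VAux.VF_shift (-1) hDθ
      (fun j u hu => hW.mapD_le j (Submodule.mem_map_of_mem hu)) u hu
  refine ⟨V, ⟨⟨VAux.VF_anti, ?_, ?_, ?_, ?_, ?_, ?_⟩, ?_, ?_⟩, ?_⟩
  · intro u
    obtain ⟨i, hi⟩ := hex u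
    exact ⟨_, VAux.W_le_VF hanti hp hspec hlo i hi⟩
  · exact ⟨l, hl, fun i α β hα hβ => le_antisymm
      (VAux.VF_disc hanti hex hp hspec hl hB i hα.1 hβ.2)
      (VAux.VF_disc hanti hex hp hspec hl hB i hβ.1 hα.2)⟩
  · rintro a ha α _ ⟨u, hu, rfl⟩
    exact hVA α a ha u hu
  · rintro α _ ⟨u, hu, rfl⟩
    exact hVT α u hu
  · rintro α _ ⟨u, hu, rfl⟩
    exact hVD α u hu
  · intro α
    obtain ⟨β, hβ, N, hN⟩ := VAux.VF_nil (hθ := hθ) hanti hex hp hspec hlo hhi hl hB α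
    refine ⟨N + 1, by omega, fun u hu => ?_⟩
    have hle : V β ≤ VFilt.gt V α := le_iSup₂_of_le β hβ le_rfl
    apply hle
    have e : -θ + (α : k) • (1 : Module.End k M)
        = Polynomial.aeval θ (-(Polynomial.X - Polynomial.C (α : k))) := by
      rw [map_neg, map_sub, Polynomial.aeval_X, Polynomial.aeval_C,
        Algebra.algebraMap_eq_smul_one]
      abel
    rw [e, ← map_pow, neg_pow, pow_succ (Polynomial.X - Polynomial.C (α : k)),
      mul_comm ((Polynomial.X - Polynomial.C (α : k)) ^ N), ← mul_assoc, map_mul]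
    exact VAux.stab (hVθ β) _ _ (hN u hu)
  · intro α
    obtain ⟨m, hm⟩ : ∃ m : ℤ, (m : ℚ) - 1 + hi ≤ α :=
      ⟨⌊α + 1 - hi⌋, by have := Int.floor_le (α + 1 - hi); linarith⟩
    have hVW : V α ≤ W m := VAux.VF_le_W hanti hex hp hspec hhi m hm
    obtain ⟨F, hF, hF'⟩ := hW.fg m
    let toK : Submodule (VFilt.A0 T D C) M → Submodule k M := fun N =>
      { carrier := N
        add_mem' := fun ha hb => N.add_mem ha hb
        zero_mem' := N.zero_mem
        smul_mem' := fun c x hx => by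
          have := N.smul_mem (algebraMap k (VFilt.A0 T D C) c) hx
          rwa [algebraMap_smul] at this }
    have htoK : ∀ N, ∀ a ∈ VFilt.A0 T D C, (toK N).map a ≤ toK N := by
      rintro N a ha _ ⟨u, hu, rfl⟩
      exact N.smul_mem (⟨a, ha⟩ : VFilt.A0 T D C) hu
    let VA : Submodule (VFilt.A0 T D C) M :=
      { carrier := V α
        add_mem' := fun ha hb => (V α).add_mem ha hb
        zero_mem' := (V α).zero_mem
        smul_mem' := fun a x hx => hVA α a a.2 x hx }
    have hle : VA ≤ Submodule.span _ (F : Set M) := fun x hx =>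
      hF' (toK (Submodule.span _ (F : Set M))) (htoK _) Submodule.subset_span (hVW hx)
    have hno := isNoetherian_of_fg_of_noetherian (Submodule.span (VFilt.A0 T D C) (F : Set M))
      ⟨F, rfl⟩
    obtain ⟨G, hG⟩ := isNoetherian_submodule.1 hno VA hle
    refine ⟨G, fun x hx => ?_, fun U hU hGU x hx => ?_⟩
    · have : x ∈ VA := hG ▸ Submodule.subset_span hx
      exact this
    · let UA : Submodule (VFilt.A0 T D C) M :=
        { carrier := U
          add_mem' := fun ha hb => U.add_mem ha hb
          zero_mem' := U.zero_mem
          smul_mem' := fun a x hx => hU a a.2 (Submodule.mem_map_of_mem hx) }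
      have h1 : VA ≤ UA := by
        rw [← hG, Submodule.span_le]
        exact hGU
      exact h1 hx
  · intro α hα
    refine le_antisymm (by rintro _ ⟨u, hu, rfl⟩; exact hVT α u hu) fun u hu => ?_
    obtain ⟨i₀, hi₀⟩ := hW.eventually
    obtain ⟨m', hm'⟩ : ∃ m' : ℤ, α ≤ m' + lo :=
      ⟨⌈α - lo⌉, by have := Int.le_ceil (α - lo); linarith⟩
    set i := max i₀ m' with hidef
    have hWV : W (i + 1) ≤ (V α).map T := by
      rw [hi₀ i (le_max_left _ _)]
      refine Submodule.map_mono ((hanti (le_max_right _ _)).trans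
        ((VAux.W_le_VF hanti hp hspec hlo m').trans (VAux.VF_anti hm')))
    obtain ⟨b, hb, hbu⟩ := hu (i + 1)
    have hst : ∀ v ∈ (V α).map T, θ v ∈ (V α).map T := by
      rintro _ ⟨v, hv, rfl⟩
      have h1 : θ * T = T * (θ + 1) := by
        rw [mul_add, hTθ, Rat.cast_one, one_smul, sub_mul, one_mul, mul_one]; abel
      refine ⟨(θ + 1) v, add_mem (hVθ α v hv) hv, ?_⟩
      rw [← Module.End.mul_apply, ← h1, Module.End.mul_apply]
    have hX : VAux.Good {(1 : ℚ)} (Polynomial.X - Polynomial.C (1 : k)) := by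
      refine ⟨Polynomial.X_sub_C_ne_zero _, Polynomial.Splits.X_sub_C _, fun x hx => ?_⟩
      rw [Polynomial.root_X_sub_C] at hx
      exact ⟨1, rfl, by rw [← hx, Rat.cast_one]⟩
    refine VAux.coprime_mem hst hb hX (hWV hbu) ?_ ?_
    · refine ⟨D u, by simpa using hVD _ u hu, ?_⟩
      rw [← Module.End.mul_apply, hDT]
      simp
    · intro q hq hq1
      simp only [Set.mem_Ici, Set.mem_singleton_iff] at hq hq1
      linarith
  · intro hroots i
    have hp' : VAux.Good {q : ℚ | 0 ≤ q ∧ q < 1} p := by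
      refine ⟨hp.1, hp.2.1, fun x hx => ?_⟩
      obtain ⟨q, h1, h2⟩ := hroots x hx
      exact ⟨q, h2, h1⟩
    refine le_antisymm (VAux.VF_le_W hanti hex hp' hspec (hi := 1) (fun q hq => hq.2) i
      (by linarith)) ?_
    have := VAux.W_le_VF (hθ := hθ) hanti hp' hspec (lo := 0) (fun q hq => hq.1) i
    rwa [add_zero] at this
end

section
/- Assume that A0 is a left Noetherian ring and that M admits a V-filtration (V^α)_{α∈ℚ}. Then for every w ∈ M the ideal I_w ⊆ k[x] is nonzero; moreover, if w ∈ V^α, then the monic generator b_w of I_w factors over ℚ as a product of linear factors, and every root γ of b_w is a rational number satisfying γ ≤ −α and V^{−γ} ≠ V^{>−γ}. -/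
open Module

/-- The ideal `I_w = {b ∈ k[x] : b(S)(w) ∈ A0·(T w)}` attached to `w ∈ M`
(abstracting the condition `b(s)·w ∈ V^1 D_{X×A¹}·w` defining the `b`-function of `w`). -/
def VFilt.bSet {k : Type*} [Field k] [CharZero k]
    {M : Type*} [AddCommGroup M] [Module k M]
    (T D : Module.End k M) (C : Set (Module.End k M)) (w : M) : Set (Polynomial k) :=
  {b : Polynomial k | ∃ a ∈ VFilt.A0 T D C, (Polynomial.aeval (-(D * T)) b) w = a (T w)}

section Helpers

variable {k : Type*} [Field k] [CharZero k]
variable {M : Type*} [AddCommGroup M] [Module k M]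

lemma VFilt.T_mem (T D : Module.End k M) (C : Set (Module.End k M)) : T ∈ VFilt.A0 T D C :=
  Algebra.subset_adjoin (by simp)

lemma VFilt.S_mem (T D : Module.End k M) (C : Set (Module.End k M)) :
    -(D * T) ∈ VFilt.A0 T D C :=
  Algebra.subset_adjoin (by simp)

lemma VFilt.aeval_mem (T D : Module.End k M) (C : Set (Module.End k M)) (b : Polynomial k) :
    Polynomial.aeval (-(D * T)) b ∈ VFilt.A0 T D C := by
  have h := Polynomial.aeval_mem_adjoin_singleton k (-(D * T)) (p := b)
  exact (Algebra.adjoin_mono (by simp)) h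

lemma VFilt.T_normal (T D : Module.End k M) (C : Set (Module.End k M))
    (hweyl : D * T - T * D = 1)
    (hC : ∀ c ∈ C, Commute c T ∧ Commute c D) (a : Module.End k M) (ha : a ∈ VFilt.A0 T D C) :
    ∃ a' ∈ VFilt.A0 T D C, T * a = a' * T := by
  unfold VFilt.A0 at ha
  induction ha using Algebra.adjoin_induction with
  | mem x hx =>
    rcases hx with (rfl | rfl) | hx
    · exact ⟨x, VFilt.T_mem _ D C, rfl⟩
    · refine ⟨-(D * T) + 1, add_mem (VFilt.S_mem T D C) (one_mem _), ?_⟩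
      rw [← hweyl]
      noncomm_ring
    · exact ⟨x, Algebra.subset_adjoin (Or.inr hx), ((hC x hx).1).eq.symm⟩
  | algebraMap r => exact ⟨_, Subalgebra.algebraMap_mem _ r, (Algebra.commutes r T).symm⟩
  | add x y _ _ hx hy =>
    obtain ⟨x', hx', ex⟩ := hx
    obtain ⟨y', hy', ey⟩ := hy
    exact ⟨x' + y', add_mem hx' hy', by rw [mul_add, ex, ey, add_mul]⟩
  | mul x y _ _ hx hy =>
    obtain ⟨x', hx', ex⟩ := hx
    obtain ⟨y', hy', ey⟩ := hy
    exact ⟨x' * y', mul_mem hx' hy', by rw [← mul_assoc, ex, mul_assoc, ey, mul_assoc]⟩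

lemma VFilt.Tpow_normal (T D : Module.End k M) (C : Set (Module.End k M))
    (hweyl : D * T - T * D = 1)
    (hC : ∀ c ∈ C, Commute c T ∧ Commute c D) (n : ℕ)
    (a : Module.End k M) (ha : a ∈ VFilt.A0 T D C) :
    ∃ a' ∈ VFilt.A0 T D C, T ^ n * a = a' * T ^ n := by
  induction n with
  | zero => exact ⟨a, ha, by simp⟩
  | succ n ih =>
    obtain ⟨b, hb, eb⟩ := ih
    obtain ⟨c, hc, ec⟩ := VFilt.T_normal T D C hweyl hC b hb
    exact ⟨c, hc, by rw [pow_succ', mul_assoc, eb, ← mul_assoc, ec, mul_assoc]⟩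

/-- Artin–Rees: for large `n`, `V^{n+2} ∩ A0 w ⊆ A0 T w`. -/
lemma VFilt.artinRees (T D : Module.End k M) (C : Set (Module.End k M))
    (hweyl : D * T - T * D = 1)
    (hC : ∀ c ∈ C, Commute c T ∧ Commute c D)
    (hNoeth : IsNoetherianRing ↥(VFilt.A0 T D C))
    (V : ℚ → Submodule k M) (hV : IsVFiltration T D C V) (w : M) :
    ∃ n : ℕ, ∀ a ∈ VFilt.A0 T D C, a w ∈ V (n + 2) → ∃ a' ∈ VFilt.A0 T D C, a w = a' (T w) := by
  let A := VFilt.A0 T D C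
  let V1 : Submodule A M :=
    { carrier := V 1
      add_mem' := fun h1 h2 => (V 1).add_mem h1 h2
      zero_mem' := (V 1).zero_mem
      smul_mem' := fun a x hx => hV.stable a.1 a.2 1 ⟨x, hx, rfl⟩ }
  have hfg : V1.FG := by
    obtain ⟨F, hF, hW⟩ := hV.fg 1
    refine ⟨F, le_antisymm (Submodule.span_le.2 hF) ?_⟩
    let W : Submodule k M :=
      { carrier := Submodule.span A (F : Set M)
        add_mem' := fun h1 h2 => add_mem h1 h2
        zero_mem' := zero_mem _
        smul_mem' := fun c x hx => by
          have := (Submodule.span A (F : Set M)).smul_mem (algebraMap k A c) hx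
          exact this }
    have := hW W (by
      rintro a ha _ ⟨x, hx, rfl⟩
      exact (Submodule.span A (F : Set M)).smul_mem (⟨a, ha⟩ : A) hx) Submodule.subset_span
    exact this
  haveI : IsNoetherian A V1 := isNoetherian_of_fg_of_noetherian V1 hfg
  let U : ℕ →o Submodule A V1 :=
    { toFun := fun n =>
        { carrier := {u | ∃ a ∈ A, (T ^ n) u.1 = a w}
          add_mem' := by
            rintro x y ⟨a, ha, ea⟩ ⟨b, hb, eb⟩
            exact ⟨a + b, add_mem ha hb, by simp [ea, eb]⟩
          zero_mem' := ⟨0, zero_mem _, by simp⟩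
          smul_mem' := by
            rintro ⟨c, hc⟩ x ⟨a, ha, ea⟩
            obtain ⟨c', hc', ec⟩ := VFilt.Tpow_normal T D C hweyl hC n c hc
            refine ⟨c' * a, mul_mem hc' ha, ?_⟩
            have := congrArg (fun f => f x.1) ec
            simp only [Module.End.mul_apply] at this ⊢
            rw [← ea, ← this]
            rfl }
      monotone' := by
        refine monotone_nat_of_le_succ ?_
        rintro n x ⟨a, ha, ea⟩
        exact ⟨T * a, mul_mem (VFilt.T_mem T D C) ha, by
          rw [pow_succ', Module.End.mul_apply, ea, Module.End.mul_apply]⟩ }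
  obtain ⟨n, hn⟩ := monotone_stabilizes_iff_noetherian.2 this U
  have hT : ∀ m : ℕ, V (m + 1) = (V 1).map (T ^ m) := by
    intro m
    induction m with
    | zero => simp [Module.End.one_eq_id]
    | succ m ih =>
      have := hV.mapT_eq (m + 1) (by positivity)
      push_cast
      rw [← this, ih, ← Submodule.map_comp, pow_succ', Module.End.mul_eq_comp]
  refine ⟨n, fun a ha hmem => ?_⟩
  have h2 := hT (n + 1)
  have e : (((n + 1 : ℕ) : ℚ) + 1) = n + 2 := by push_cast; ring
  rw [e] at h2
  rw [h2] at hmem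
  obtain ⟨u, hu, eu⟩ := hmem
  have hu1 : (⟨u, hu⟩ : V1) ∈ U (n + 1) := ⟨a, ha, eu⟩
  rw [← hn (n + 1) (by omega)] at hu1
  obtain ⟨b, hb, eb⟩ := hu1
  obtain ⟨c, hc, ec⟩ := VFilt.T_normal T D C hweyl hC b hb
  refine ⟨c, hc, ?_⟩
  rw [← eu, pow_succ', Module.End.mul_apply]
  have := congrArg (fun f => f w) ec
  simp only [Module.End.mul_apply] at this
  rw [← this, ← eb]

lemma VFilt.exists_prod (T D : Module.End k M) (C : Set (Module.End k M))
    (V : ℚ → Submodule k M) (hV : IsVFiltration T D C V) (w : M) (α : ℚ) (hw : w ∈ V α)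
    (β : ℚ) : ∃ L : Multiset ℚ, (∀ γ ∈ L, γ ≤ -α ∧ V (-γ) ≠ VFilt.gt V (-γ)) ∧
      (Polynomial.aeval (-(D * T))
        (L.map fun γ : ℚ => Polynomial.X - Polynomial.C (γ : k)).prod) w ∈ V β := by
  obtain ⟨l, hl, hd⟩ := hV.discrete
  have hl' : (0 : ℚ) < l := by exact_mod_cast hl
  have hgt : ∀ i : ℤ, VFilt.gt V ((i : ℚ) / l) ≤ V ((i + 1 : ℚ) / l) := by
    intro i
    refine iSup₂_le fun β hβ => ?_
    rcases le_total β ((i + 1 : ℚ) / l) with h | h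
    · refine (hd i β _ ⟨hβ, h⟩ ⟨?_, le_rfl⟩).le
      exact lt_of_lt_of_le hβ h
    · exact hV.antitone h
  set i : ℤ := ⌈α * l⌉ with hi
  have hαi : α ≤ (i : ℚ) / l := by
    rw [le_div_iff₀ hl']; exact Int.le_ceil _
  have hwi : w ∈ V ((i : ℚ) / l) := by
    have := hd (i - 1) α ((i : ℚ) / l) ⟨?_, ?_⟩ ⟨?_, ?_⟩
    · rwa [this] at hw
    · rw [div_lt_iff₀ hl']; push_cast
      have := Int.ceil_lt_add_one (α * l)
      linarith
    · push_cast; simpa using hαi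
    · push_cast; gcongr; linarith
    · push_cast; simp
  have key : ∀ j : ℕ, ∃ L : Multiset ℚ, (∀ γ ∈ L, γ ≤ -α ∧ V (-γ) ≠ VFilt.gt V (-γ)) ∧
      (Polynomial.aeval (-(D * T))
        (L.map fun γ : ℚ => Polynomial.X - Polynomial.C (γ : k)).prod) w
          ∈ V (((i + j : ℤ) : ℚ) / l) := by
    intro j
    induction j with
    | zero => exact ⟨0, by simp, by simpa using hwi⟩
    | succ j ih =>
      obtain ⟨L, hL, hmem⟩ := ih
      set δ : ℚ := ((i + j : ℤ) : ℚ) / l with hδ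
      have hg := hgt (i + j)
      have e : (((i + j : ℤ) : ℚ) + 1) / l = ((i + (j + 1 : ℕ) : ℤ) : ℚ) / l := by
        push_cast; ring
      rw [e] at hg
      by_cases hj : V δ = VFilt.gt V δ
      · exact ⟨L, hL, hg (hj ▸ hmem)⟩
      · obtain ⟨N, -, hN⟩ := hV.nilpotent δ
        refine ⟨Multiset.replicate N (-δ) + L, ?_, ?_⟩
        · intro γ hγ
          rcases Multiset.mem_add.1 hγ with h | h
          · obtain rfl := Multiset.eq_of_mem_replicate h
            refine ⟨neg_le_neg (hαi.trans ?_), by simpa using hj⟩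
            rw [hδ]; gcongr; push_cast; simp
          · exact hL γ h
        · refine hg ?_
          have := hN _ hmem
          rw [Multiset.map_add, Multiset.prod_add, map_mul, Module.End.mul_apply]
          convert this using 2
          simp [Algebra.algebraMap_eq_smul_one]
  obtain ⟨j, hj⟩ := exists_nat_ge (β * l - i)
  obtain ⟨L, hL, hmem⟩ := key j
  refine ⟨L, hL, hV.antitone ?_ hmem⟩
  rw [le_div_iff₀ hl']; push_cast; linarith

end Helpers

/-- **Theorem 4.6(i).** If `A0` is left Noetherian and `M` admits a `V`-filtration, then
for every `w ∈ M` the ideal `I_w` is nonzero; moreover, if `w ∈ V^α`, the monic generator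
`b_w` of `I_w` factors over `ℚ` into linear factors, and every root `γ` of `b_w` is a
rational number with `γ ≤ -α` and `V^{-γ} ≠ V^{>-γ}`. -/
theorem stmt13 {k : Type*} [Field k] [CharZero k]
    {M : Type*} [AddCommGroup M] [Module k M]
    (T D : Module.End k M) (C : Set (Module.End k M))
    (hweyl : D * T - T * D = 1)
    (hC : ∀ c ∈ C, Commute c T ∧ Commute c D)
    (hNoeth : IsNoetherianRing ↥(VFilt.A0 T D C))
    (V : ℚ → Submodule k M) (hV : IsVFiltration T D C V) :
    (∀ w : M, ∃ b : Polynomial k, b ≠ 0 ∧ b ∈ VFilt.bSet T D C w) ∧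
    (∀ (w : M) (α : ℚ), w ∈ V α →
      ∃ bw : Polynomial k, bw.Monic ∧ bw ∈ VFilt.bSet T D C w ∧
        (∀ c ∈ VFilt.bSet T D C w, bw ∣ c) ∧
        ∃ L : Multiset ℚ,
          bw = (L.map fun γ : ℚ => Polynomial.X - Polynomial.C (γ : k)).prod ∧
          ∀ γ ∈ L, γ ≤ -α ∧ V (-γ) ≠ VFilt.gt V (-γ)) := by
  classical
  have main : ∀ (w : M) (α : ℚ), w ∈ V α → ∃ L : Multiset ℚ,
      (L.map fun γ : ℚ => Polynomial.X - Polynomial.C (γ : k)).prod ∈ VFilt.bSet T D C w ∧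
      ∀ γ ∈ L, γ ≤ -α ∧ V (-γ) ≠ VFilt.gt V (-γ) := by
    intro w α hw
    obtain ⟨n, hn⟩ := VFilt.artinRees T D C hweyl hC hNoeth V hV w
    obtain ⟨L, hL, hmem⟩ := VFilt.exists_prod T D C V hV w α hw (n + 2)
    exact ⟨L, hn _ (VFilt.aeval_mem T D C _) hmem, hL⟩
  have hmonic : ∀ L : Multiset ℚ,
      (L.map fun γ : ℚ => Polynomial.X - Polynomial.C (γ : k)).prod.Monic := fun L =>
    Polynomial.monic_multiset_prod_of_monic _ _ fun γ _ => Polynomial.monic_X_sub_C _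
  refine ⟨fun w => ?_, fun w α hw => ?_⟩
  · obtain ⟨α, hw⟩ := hV.exhaustive w
    obtain ⟨L, hL, -⟩ := main w α hw
    exact ⟨_, (hmonic L).ne_zero, hL⟩
  obtain ⟨L, hL, hroots⟩ := main w α hw
  let I : Ideal (Polynomial k) :=
    { carrier := VFilt.bSet T D C w
      add_mem' := by
        rintro x y ⟨a, ha, ea⟩ ⟨b, hb, eb⟩
        exact ⟨a + b, add_mem ha hb, by simp [ea, eb]⟩
      zero_mem' := ⟨0, zero_mem _, by simp⟩
      smul_mem' := by
        rintro c x ⟨a, ha, ea⟩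
        exact ⟨_, mul_mem (VFilt.aeval_mem T D C c) ha, by
          rw [smul_eq_mul, map_mul, Module.End.mul_apply, ea, Module.End.mul_apply]⟩ }
  obtain ⟨g, hg⟩ := (IsPrincipalIdealRing.principal I).principal
  have hgI : g ∈ I := by rw [hg]; exact Submodule.mem_span_singleton_self g
  have hdvd : ∀ c ∈ I, g ∣ c := fun c hc => by
    rw [hg] at hc; exact Ideal.mem_span_singleton.1 hc
  have hg0 : g ≠ 0 := by
    rintro rfl
    exact (hmonic L).ne_zero (zero_dvd_iff.1 (hdvd _ hL))
  have hnm : (normalize g).Monic := Polynomial.monic_normalize hg0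
  have hnd : normalize g ∣ (L.map fun γ : ℚ => Polynomial.X - Polynomial.C (γ : k)).prod :=
    normalize_dvd_iff.2 (hdvd _ hL)
  have hprod : (L.map fun γ : ℚ => Polynomial.X - Polynomial.C (γ : k)).prod =
      ((L.map (fun γ : ℚ => (γ : k))).map fun a => Polynomial.X - Polynomial.C a).prod := by
    rw [Multiset.map_map]; rfl
  have hrt : (L.map fun γ : ℚ => Polynomial.X - Polynomial.C (γ : k)).prod.roots
      = L.map (fun γ : ℚ => (γ : k)) := by
    rw [hprod, Polynomial.roots_multiset_prod_X_sub_C]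
  have hsp : (normalize g).Splits := by
    refine Polynomial.Splits.of_dvd ?_ (hmonic L).ne_zero hnd
    refine Polynomial.Splits.multisetProd ?_
    intro f hf
    obtain ⟨γ, -, rfl⟩ := Multiset.mem_map.1 hf
    exact Polynomial.Splits.X_sub_C _
  have hle : (normalize g).roots ≤ L.map (fun γ : ℚ => (γ : k)) := by
    rw [← hrt]; exact Polynomial.roots.le_of_dvd (hmonic L).ne_zero hnd
  have hr : ∀ a ∈ (normalize g).roots, ∃ γ ∈ L, (γ : k) = a := fun a ha =>
    Multiset.mem_map.1 (Multiset.mem_of_le hle ha)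
  choose! φ hφ hφ' using hr
  refine ⟨normalize g, hnm, ?_, fun c hc => normalize_dvd_iff.2 (hdvd c hc),
    (normalize g).roots.map φ, ?_, fun γ hγ => ?_⟩
  · exact I.mem_of_dvd (dvd_normalize_iff.2 dvd_rfl) hgI
  · conv_lhs => rw [hsp.eq_prod_roots_of_monic hnm]
    rw [Multiset.map_map]
    refine congrArg Multiset.prod (Multiset.map_congr rfl fun a ha => ?_)
    simp only [Function.comp_apply, hφ' a ha]
  · obtain ⟨a, ha, rfl⟩ := Multiset.mem_map.1 hγ
    exact hroots _ (hφ a ha)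
end

section
/- For every nonzero weighted-homogeneous polynomial h ∈ R, of weighted degree ρ(h), the element (∏_{λ ∈ Σ(f), λ ≥ ρ(h)} (X + (λ + |w|))) · h of N lies in the smallest D-stable k-subspace of N containing the image of J_f (i.e., the product ∏_{λ∈Σ(f), λ≥ρ(h)}(s + λ + |w|)·h f^s belongs to D_R·J_f f^s). -/
/-- Euler's identity with rational weights. -/
lemma euler_rat {k : Type*} [Field k] [CharZero k] {n : ℕ} (w : Fin n → ℚ)
    (g : MvPolynomial (Fin n) k) (q : ℚ) (hg : g.IsWeightedHomogeneous w q) :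
    ∑ i, (w i : k) • (MvPolynomial.X i * MvPolynomial.pderiv i g) = (q : k) • g := by
  have key : ∀ m ∈ g.support,
      ∑ i, (w i : k) • (MvPolynomial.X i *
        MvPolynomial.pderiv i (MvPolynomial.monomial m (g.coeff m))) =
      (q : k) • MvPolynomial.monomial m (g.coeff m) := by
    intro m hm
    have h1 := hg (MvPolynomial.mem_support_iff.mp hm)
    rw [Finsupp.weight_apply, Finsupp.sum_fintype _ _ (by simp)] at h1
    simp_rw [MvPolynomial.X_mul_pderiv_monomial, ← Nat.cast_smul_eq_nsmul k, smul_smul,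
      ← Finset.sum_smul]
    congr 1
    rw [← h1]
    push_cast
    refine Finset.sum_congr rfl fun i _ => ?_
    simp [mul_comm]
  conv_rhs => rw [g.as_sum, Finset.smul_sum, ← Finset.sum_congr rfl key]
  rw [Finset.sum_comm]
  refine Finset.sum_congr rfl fun i _ => ?_
  conv_lhs => rw [g.as_sum]
  rw [map_sum, Finset.mul_sum, Finset.smul_sum]

/-- Abstract form of the lemma. -/
lemma abstract_form {k : Type*} [Field k] [CharZero k] {n : ℕ}
    (w : Fin n → ℚ) (hw : ∀ i, 0 < w i)
    {B : Type*} [CommRing B] [Algebra k B] (φ : MvPolynomial (Fin n) k →ₐ[k] B)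
    (s : B) (g : Fin n → B)
    (hg : ∑ i, (w i : k) • (φ (MvPolynomial.X i) * g i) = 1)
    (L : Fin n → Module.End k B)
    (hLs : ∀ i u, L i (s * u) = s * L i u)
    (hL : ∀ i r, L i (φ r) = φ (MvPolynomial.pderiv i r) + s * g i * φ r)
    (Jf : Ideal (MvPolynomial (Fin n) k))
    (W : Submodule k B)
    (hW1 : ∀ r, ∀ u ∈ W, φ r * u ∈ W) (hW2 : ∀ i, ∀ u ∈ W, L i u ∈ W)
    (hWJ : ∀ r ∈ Jf, φ r ∈ W) :
    ∀ (N : ℕ) (S : Finset ℚ) (h : MvPolynomial (Fin n) k) (q : ℚ),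
      S.card ≤ N → h.IsWeightedHomogeneous w q →
      (∀ x : ℚ, x ∈ S ↔ (∃ g : MvPolynomial (Fin n) k,
        g ∉ Jf ∧ g.IsWeightedHomogeneous w x) ∧ q ≤ x) →
      (∏ x ∈ S, (s + algebraMap k B ((x + ∑ i, w i : ℚ) : k))) * φ h ∈ W := by
  set F : ℚ → B := fun x => s + algebraMap k B ((x + ∑ i, w i : ℚ) : k) with hF
  have hLF : ∀ i x u, L i (F x * u) = F x * L i u := by
    intro i x u
    simp only [hF, add_mul, map_add, hLs, ← Algebra.smul_def, map_smul]
  have hLP : ∀ (i) (T : Finset ℚ) (u), L i ((∏ x ∈ T, F x) * u) = (∏ x ∈ T, F x) * L i u := by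
    intro i T
    induction T using Finset.induction_on with
    | empty => simp
    | insert a T ha ih => intro u; rw [Finset.prod_insert ha, mul_assoc, hLF, ih, mul_assoc]
  -- Euler operator
  have hE : ∀ (T : Finset ℚ) (h : MvPolynomial (Fin n) k) (q : ℚ),
      h.IsWeightedHomogeneous w q →
      ∑ i, (w i : k) • (φ (MvPolynomial.X i) * L i ((∏ x ∈ T, F x) * φ h)) =
        (q : k) • ((∏ x ∈ T, F x) * φ h) + s * ((∏ x ∈ T, F x) * φ h) := by
    intro T h q hq
    have e := congrArg φ (euler_rat w h q hq)
    simp only [map_sum, map_smul, map_mul] at e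
    calc _ = (∏ x ∈ T, F x) * ∑ i, (w i : k) •
              (φ (MvPolynomial.X i) * φ (MvPolynomial.pderiv i h))
            + s * ((∏ x ∈ T, F x) * φ h) * ∑ i, (w i : k) • (φ (MvPolynomial.X i) * g i) := by
          rw [Finset.mul_sum, Finset.mul_sum, ← Finset.sum_add_distrib]
          refine Finset.sum_congr rfl fun i _ => ?_
          rw [hLP, hL]
          simp only [Algebra.smul_def]
          ring
      _ = _ := by
          rw [e, hg]
          simp only [Algebra.smul_def]
          ring
  have hA : ∀ (T : Finset ℚ) (h : MvPolynomial (Fin n) k) (q : ℚ) (a : ℚ),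
      h.IsWeightedHomogeneous w q → (∏ x ∈ T, F x) * φ h ∈ W →
      F a * ((∏ x ∈ T, F x) * φ h) ∈ W := by
    intro T h q a hq hm
    have e := hE T h q hq
    have h1 : s * ((∏ x ∈ T, F x) * φ h) ∈ W := by
      rw [← sub_eq_iff_eq_add'] at e
      rw [← e]
      exact W.sub_mem (W.sum_mem fun i _ => W.smul_mem _ (hW1 _ _ (hW2 _ _ hm)))
        (W.smul_mem _ hm)
    simp only [hF, add_mul, ← Algebra.smul_def]
    exact W.add_mem h1 (W.smul_mem _ hm)
  have hB : ∀ (h : MvPolynomial (Fin n) k) (q : ℚ) (T U : Finset ℚ),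
      h.IsWeightedHomogeneous w q → (∏ x ∈ T, F x) * φ h ∈ W → T ⊆ U →
      (∏ x ∈ U, F x) * φ h ∈ W := by
    intro h q T U hq hm hTU
    have aux : ∀ V : Finset ℚ, Disjoint T V → (∏ x ∈ T ∪ V, F x) * φ h ∈ W := by
      intro V
      induction V using Finset.induction_on with
      | empty => intro _; simpa using hm
      | insert a V ha ih =>
        intro hd
        rw [Finset.disjoint_insert_right] at hd
        rw [Finset.union_insert, Finset.prod_insert (by simp [hd.1, ha]), mul_assoc]
        exact hA _ h q a hq (ih hd.2)
    have := aux (U \ T) Finset.disjoint_sdiff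
    rwa [Finset.union_sdiff_of_subset hTU] at this
  intro N
  induction N with
  | zero =>
    intro S h q hc hq hS
    have hS0 : S = ∅ := Finset.card_eq_zero.mp (Nat.le_zero.mp hc)
    have hJ : h ∈ Jf := by
      by_contra hn
      have := (hS q).mpr ⟨⟨h, hn, hq⟩, le_rfl⟩
      simp [hS0] at this
    simpa [hS0] using hWJ h hJ
  | succ N ih =>
    intro S h q hc hq hS
    by_cases hJ : h ∈ Jf
    · exact hB h q ∅ S hq (by simpa using hWJ h hJ) (Finset.empty_subset _)
    have hqS : q ∈ S := (hS q).mpr ⟨⟨h, hJ, hq⟩, le_rfl⟩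
    have hx : ∀ i, (∏ x ∈ S.erase q, F x) * φ (MvPolynomial.X i * h) ∈ W := by
      intro i
      have hh : (MvPolynomial.X i * h).IsWeightedHomogeneous w (w i + q) :=
        (MvPolynomial.isWeightedHomogeneous_X k w i).mul hq
      have hsub : S.filter (w i + q ≤ ·) ⊆ S.erase q := by
        intro x hx
        rw [Finset.mem_filter] at hx
        have := hw i
        refine Finset.mem_erase.mpr ⟨?_, hx.1⟩
        rintro rfl
        linarith [hx.2]
      refine hB _ _ (S.filter (w i + q ≤ ·)) _ hh (ih _ _ _ ?_ hh ?_) hsub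
      · have := Finset.card_le_card hsub
        rw [Finset.card_erase_of_mem hqS] at this
        omega
      · intro x
        have := hw i
        rw [Finset.mem_filter, hS]
        constructor
        · rintro ⟨⟨a, _⟩, b⟩; exact ⟨a, b⟩
        · rintro ⟨a, b⟩; exact ⟨⟨a, by linarith⟩, b⟩
    have key : (∏ x ∈ S, F x) * φ h =
        ∑ i, (w i : k) • L i ((∏ x ∈ S.erase q, F x) * φ (MvPolynomial.X i * h)) := by
      have e := hE (S.erase q) h q hq
      rw [← Finset.mul_prod_erase S F hqS]
      have e2 : ∀ i, L i ((∏ x ∈ S.erase q, F x) * φ (MvPolynomial.X i * h)) =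
          (∏ x ∈ S.erase q, F x) * φ h +
            φ (MvPolynomial.X i) * L i ((∏ x ∈ S.erase q, F x) * φ h) := by
        intro i
        rw [hLP, hLP, hL, hL, MvPolynomial.pderiv_mul, MvPolynomial.pderiv_X_self, one_mul]
        simp only [map_add, map_mul]
        ring
      simp only [e2, smul_add, Finset.sum_add_distrib, e, ← Finset.sum_smul]
      simp only [hF, Algebra.smul_def]
      push_cast
      ring
    rw [key]
    exact W.sum_mem fun i _ => W.smul_mem _ (hW2 _ _ (hx i))

/-- **Lemma (Section 5, `lem_form_qhomog`).** Let `f ∈ R = k[x₁,…,xₙ]` be weighted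
homogeneous of weighted degree `1` with an isolated singularity, and let `h` be a nonzero
weighted homogeneous polynomial of weighted degree `ρ(h)`. Then, in the model
`N = R_f[X]` of `R_f[s]f^s`, the element
`(∏_{λ ∈ Σ(f), λ ≥ ρ(h)} (s + λ + |w|))·h·f^s` lies in the smallest `D_R`-stable
`k`-subspace of `N` containing the image of `J_f`, i.e. in `D_R·J_f f^s`. -/
theorem stmt15 {k : Type*} [Field k] [IsAlgClosed k] [CharZero k]
    (n : ℕ) (hn : 1 ≤ n)
    (w : Fin n → ℚ) (hw : ∀ i, 0 < w i)
    (f : MvPolynomial (Fin n) k) (hf0 : f ≠ 0)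
    (hfhom : f.IsWeightedHomogeneous w 1)
    -- the Jacobian ideal
    (Jf : Ideal (MvPolynomial (Fin n) k))
    (hJf : Jf = Ideal.span (Set.range fun i : Fin n => MvPolynomial.pderiv i f))
    -- isolated singularity: `R/J_f` is finite dimensional over `k`
    (hfd : FiniteDimensional k (MvPolynomial (Fin n) k ⧸ Jf))
    -- the unique extensions of the partial derivatives to `k`-derivations of `R_f`
    (pd : Fin n → Derivation k (Localization.Away f) (Localization.Away f))
    (hpd : ∀ (i : Fin n) (r : MvPolynomial (Fin n) k),
      pd i (algebraMap (MvPolynomial (Fin n) k) (Localization.Away f) r) =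
        algebraMap (MvPolynomial (Fin n) k) (Localization.Away f)
          (MvPolynomial.pderiv i r))
    -- the twisted operators `L_i(u) = ∂_i(u) + X·f⁻¹·(∂f/∂x_i)·u`,
    -- with `∂_i` acting coefficientwise on `N = R_f[X]`
    (L : Fin n → Module.End k (Polynomial (Localization.Away f)))
    (hL : ∀ (i : Fin n) (a : Localization.Away f) (m : ℕ),
      L i (Polynomial.C a * Polynomial.X ^ m) =
        Polynomial.C (pd i a) * Polynomial.X ^ m +
          Polynomial.X * Polynomial.C (IsLocalization.Away.invSelf f *
            algebraMap (MvPolynomial (Fin n) k) (Localization.Away f)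
              (MvPolynomial.pderiv i f)) *
            (Polynomial.C a * Polynomial.X ^ m))
    -- the algebra of operators coming from `D_R`
    (Dalg : Subalgebra k (Module.End k (Polynomial (Localization.Away f))))
    (hDalg : Dalg = Algebra.adjoin k
      ((Set.range fun r : MvPolynomial (Fin n) k =>
          (LinearMap.mulLeft k (Polynomial.C
              (algebraMap (MvPolynomial (Fin n) k) (Localization.Away f) r)) :
            Module.End k (Polynomial (Localization.Away f)))) ∪
        Set.range L))
    -- the set `Σ(f)` of weighted degrees of weighted homogeneous polynomials not in `J_f`
    (Sigf : Set ℚ)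
    (hSigf : Sigf = {q : ℚ | ∃ g : MvPolynomial (Fin n) k,
      g ∉ Jf ∧ g.IsWeightedHomogeneous w q})
    -- the data of the statement
    (h : MvPolynomial (Fin n) k) (ρh : ℚ) (hh0 : h ≠ 0)
    (hhhom : h.IsWeightedHomogeneous w ρh)
    -- `S` enumerates `{λ ∈ Σ(f) : λ ≥ ρ(h)}` (a finite set)
    (S : Finset ℚ) (hS : ∀ q : ℚ, q ∈ S ↔ q ∈ Sigf ∧ ρh ≤ q) :
    ∀ W : Submodule k (Polynomial (Localization.Away f)),
      (∀ a ∈ Dalg, W.map a ≤ W) →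
      (∀ r ∈ Jf, (Polynomial.C
        (algebraMap (MvPolynomial (Fin n) k) (Localization.Away f) r) :
          Polynomial (Localization.Away f)) ∈ W) →
      (∏ lam ∈ S, (Polynomial.X + Polynomial.C
          (algebraMap k (Localization.Away f) ((lam + ∑ i, w i : ℚ) : k)))) *
        Polynomial.C (algebraMap (MvPolynomial (Fin n) k) (Localization.Away f) h) ∈ W := by
  intro W hWD hWJ
  have hmul : ∀ r : MvPolynomial (Fin n) k, ∀ u ∈ W, Polynomial.C
      (algebraMap (MvPolynomial (Fin n) k) (Localization.Away f) r) * u ∈ W := by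
    intro r u hu
    refine hWD (LinearMap.mulLeft k (Polynomial.C
      (algebraMap (MvPolynomial (Fin n) k) (Localization.Away f) r))) ?_ ⟨u, hu, rfl⟩
    rw [hDalg]
    exact Algebra.subset_adjoin (Or.inl ⟨r, rfl⟩)
  have hLW : ∀ i, ∀ u ∈ W, L i u ∈ W := by
    intro i u hu
    refine hWD (L i) ?_ ⟨u, hu, rfl⟩
    rw [hDalg]
    exact Algebra.subset_adjoin (Or.inr ⟨i, rfl⟩)
  let φ : MvPolynomial (Fin n) k →ₐ[k] Polynomial (Localization.Away f) :=
    (Polynomial.CAlgHom (R := k) (A := Localization.Away f)).comp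
      (IsScalarTower.toAlgHom k (MvPolynomial (Fin n) k) (Localization.Away f))
  have hφ : ∀ r, φ r = Polynomial.C
      (algebraMap (MvPolynomial (Fin n) k) (Localization.Away f) r) := fun r => rfl
  have hsum := euler_rat w f 1 hfhom
  subst hSigf
  refine abstract_form w hw φ Polynomial.X
    (fun i => Polynomial.C (IsLocalization.Away.invSelf f *
      algebraMap (MvPolynomial (Fin n) k) (Localization.Away f) (MvPolynomial.pderiv i f)))
    ?_ L ?_ ?_ Jf W hmul hLW hWJ S.card S h ρh le_rfl hhhom hS
  · have e := congrArg φ hsum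
    simp only [map_sum, map_smul, map_mul] at e
    have e3 : φ f * Polynomial.C (IsLocalization.Away.invSelf f) = 1 := by
      rw [hφ, ← Polynomial.C_mul, IsLocalization.Away.mul_invSelf, Polynomial.C_1]
    rw [Rat.cast_one, one_smul] at e
    rw [← e3, ← e, Finset.sum_mul]
    refine Finset.sum_congr rfl fun i _ => ?_
    rw [hφ (MvPolynomial.pderiv i f), Polynomial.C_mul]
    simp only [Algebra.smul_def]
    ring
  · intro i u
    induction u using Polynomial.induction_on' with
    | add p q hp hq => rw [mul_add, map_add, hp, hq, map_add, mul_add]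
    | monomial m a =>
      rw [← Polynomial.C_mul_X_pow_eq_monomial,
        show Polynomial.X * (Polynomial.C a * Polynomial.X ^ m) =
          Polynomial.C a * Polynomial.X ^ (m + 1) by ring, hL, hL]
      ring
  · intro i r
    have := hL i (algebraMap (MvPolynomial (Fin n) k) (Localization.Away f) r) 0
    simp only [pow_zero, mul_one, hpd] at this
    exact this
end
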